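/- There exist a constant c > 0 and a threshold d₀ ∈ ℕ such that for every dimension d ≥ d₀, every δ ∈ [0,1], and every M-bit memory-constrained deterministic first-order algorithm that, using T queries, is guaranteed to minimize 1-Lipschitz convex functions over the unit ball of ℝ^d with accuracy ε = 1/d⁴, one has: either M ≥ d^{2−δ} or T ≥ c · d^{1+δ/3} / (log d)^{5/3}. -/

import Mathlib

open scoped RealInnerProductSpace

/-- An `M`-bit memory-constrained deterministic algorithm interacting with an oracle
with query space `S` and response space `R`: a query function and an update function. -/
structure MemAlg (M : ℕ) (S R : Type) where
  query : (Fin M → Bool) → S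
  update : (Fin M → Bool) → S → R → (Fin M → Bool)

namespace MemAlg

variable {M : ℕ} {S R : Type}

/-- The memory state after `t` iterations, interacting with the oracle `O`;
the initial memory state is `0^M`. -/
def mem (alg : MemAlg M S R) (O : S → R) : ℕ → (Fin M → Bool)
  | 0 => fun _ => false
  | t + 1 =>
      alg.update (alg.mem O t) (alg.query (alg.mem O t)) (O (alg.query (alg.mem O t)))

/-- The output of the algorithm after `T` queries: its last query
`q_T = ψ_query (Memory_{T-1})`. -/
def output (alg : MemAlg M S R) (O : S → R) (T : ℕ) : S :=
  alg.query (alg.mem O (T - 1))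

end MemAlg

/-- `O` is a first-order oracle for `f`: it returns the value of `f` together with a
subgradient of `f` at the query point. -/
def IsFirstOrderOracle {d : ℕ} (f : EuclideanSpace ℝ (Fin d) → ℝ)
    (O : EuclideanSpace ℝ (Fin d) → ℝ × EuclideanSpace ℝ (Fin d)) : Prop :=
  ∀ x, (O x).1 = f x ∧ ∀ y, f x + ⟪(O x).2, y - x⟫ ≤ f y

/-- The algorithm `alg`, using `T` queries, is guaranteed to minimize `1`-Lipschitz convex
functions over the unit ball of `ℝ^d` with accuracy `ε`: for every convex `1`-Lipschitz
`f` and every first-order oracle for `f`, the output lies in the unit ball and is an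
`ε`-approximate minimizer of `f` over the unit ball. -/
def MinimizesConvex {M : ℕ} (d : ℕ)
    (alg : MemAlg M (EuclideanSpace ℝ (Fin d)) (ℝ × EuclideanSpace ℝ (Fin d)))
    (T : ℕ) (ε : ℝ) : Prop :=
  ∀ f : EuclideanSpace ℝ (Fin d) → ℝ,
    ConvexOn ℝ Set.univ f → LipschitzWith 1 f →
      ∀ O : EuclideanSpace ℝ (Fin d) → ℝ × EuclideanSpace ℝ (Fin d),
        IsFirstOrderOracle f O →
          alg.output O T ∈ Metric.closedBall (0 : EuclideanSpace ℝ (Fin d)) 1 ∧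
          ∀ x ∈ Metric.closedBall (0 : EuclideanSpace ℝ (Fin d)) 1,
            f (alg.output O T) ≤ f x + ε


open scoped RealInnerProductSpace

/-! ### Part 1: random sign vectors, by counting -/

/-- Normalised sign vector. -/
noncomputable def sgv (d : ℕ) (s : Fin d → Bool) : EuclideanSpace ℝ (Fin d) :=
  WithLp.toLp 2 (fun i => (if s i then (1 : ℝ) else -1) / √d)

lemma sgv_inner {d : ℕ} (s : Fin d → Bool) (w : EuclideanSpace ℝ (Fin d)) :
    ⟪sgv d s, w⟫ = ∑ i, (if s i then (1 : ℝ) else -1) / √d * w i := by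
  simp [sgv, PiLp.inner_apply, mul_comm]

lemma sgv_mgf {d : ℕ} (hd : 0 < d) (w : EuclideanSpace ℝ (Fin d)) :
    ∑ s : Fin d → Bool, Real.exp ⟪sgv d s, w⟫ ≤ 2 ^ d * Real.exp (‖w‖ ^ 2 / (2 * d)) := by
  have hd' : (0 : ℝ) < d := by exact_mod_cast hd
  have h1 : ∀ s : Fin d → Bool, Real.exp ⟪sgv d s, w⟫ =
      ∏ i, Real.exp ((if s i then (1 : ℝ) else -1) / √d * w i) := by
    intro s; rw [sgv_inner, Real.exp_sum]
  simp_rw [h1]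
  rw [← Fintype.prod_sum (fun i (b : Bool) => Real.exp ((if b then (1 : ℝ) else -1) / √d * w i))]
  have h2 : ∀ i : Fin d, ∑ b : Bool, Real.exp ((if b then (1 : ℝ) else -1) / √d * w i) ≤
      2 * Real.exp ((w i) ^ 2 / (2 * d)) := by
    intro i
    have := Real.cosh_le_exp_half_sq (w i / √d)
    rw [Real.cosh_eq] at this
    have h3 : (w i / √d) ^ 2 / 2 = (w i) ^ 2 / (2 * d) := by
      rw [div_pow, Real.sq_sqrt hd'.le]; field_simp
    rw [h3] at this
    simp only [Fintype.sum_bool, if_true]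
    have e1 : (1 : ℝ) / √d * w i = w i / √d := by ring
    have e2 : (if (false = true) then (1 : ℝ) else -1) / √d * w i = -(w i / √d) := by simp; ring
    rw [e1, e2]; linarith
  calc _ ≤ ∏ i : Fin d, (2 * Real.exp ((w i) ^ 2 / (2 * d))) :=
        Finset.prod_le_prod (fun i _ => Finset.sum_nonneg fun b _ => (Real.exp_pos _).le) (fun i _ => h2 i)
    _ = _ := by
        rw [Finset.prod_mul_distrib, ← Real.exp_sum, ← Finset.sum_div, EuclideanSpace.norm_sq_eq]
        simp

lemma sgv_neg_sum {d : ℕ} (hd : 0 < d) (w : EuclideanSpace ℝ (Fin d)) :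
    ∑ s : Fin d → Bool, Real.exp (-⟪sgv d s, w⟫) ≤ 2 ^ d * Real.exp (‖w‖ ^ 2 / (2 * d)) := by
  have := sgv_mgf hd (-w)
  simpa using this

lemma sgv_norm {d : ℕ} (hd : 0 < d) (s : Fin d → Bool) : ‖sgv d s‖ = 1 := by
  have hd' : (0 : ℝ) < d := by exact_mod_cast hd
  have : ‖sgv d s‖ ^ 2 = 1 := by
    rw [EuclideanSpace.norm_sq_eq]
    have : ∀ i, ‖(sgv d s) i‖ ^ 2 = 1 / d := by
      intro i
      rw [Real.norm_eq_abs, sq_abs]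
      simp only [sgv]
      rw [div_pow, Real.sq_sqrt hd'.le]
      split_ifs <;> simp
    simp_rw [this]
    simp; field_simp
  exact (pow_eq_one_iff_of_nonneg (norm_nonneg _) two_ne_zero).mp this

lemma sgv_tail {d : ℕ} (hd : 0 < d) (w : EuclideanSpace ℝ (Fin d)) (t : ℝ) (ht : 0 ≤ t) :
    ((Finset.univ.filter fun s : Fin d → Bool => t / √d * ‖w‖ < |⟪sgv d s, w⟫|).card : ℝ) ≤
      2 * 2 ^ d * Real.exp (-(t ^ 2 / 2)) := by
  have hd' : (0 : ℝ) < d := by exact_mod_cast hd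
  have hsd : 0 < √(d : ℝ) := Real.sqrt_pos.mpr hd'
  by_cases hw : w = 0
  · subst hw
    simp
    positivity
  have hw' : 0 < ‖w‖ := norm_pos_iff.mpr hw
  set l : ℝ := t * √d / ‖w‖ with hl
  have hl0 : 0 ≤ l := by positivity
  have hn : ‖l • w‖ ^ 2 / (2 * d) = t ^ 2 / 2 := by
    rw [norm_smul, Real.norm_eq_abs, abs_of_nonneg hl0, hl]
    have : (t * √d / ‖w‖ * ‖w‖) = t * √d := by field_simp
    rw [this, mul_pow, Real.sq_sqrt hd'.le]; field_simp
  have h1 := sgv_mgf hd (l • w)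
  have h2 := sgv_neg_sum hd (l • w)
  rw [hn] at h1 h2
  have h3 : ((Finset.univ.filter fun s : Fin d → Bool => t / √d * ‖w‖ < |⟪sgv d s, w⟫|).card : ℝ) *
      Real.exp (t ^ 2) ≤ ∑ s : Fin d → Bool, (Real.exp ⟪sgv d s, l • w⟫ + Real.exp (-⟪sgv d s, l • w⟫)) := by
    rw [← nsmul_eq_mul]
    refine le_trans (Finset.card_nsmul_le_sum _
      (fun s : Fin d → Bool => (Real.exp ⟪sgv d s, l • w⟫ + Real.exp (-⟪sgv d s, l • w⟫))) _ ?_)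
      (Finset.sum_le_sum_of_subset_of_nonneg (Finset.subset_univ _) fun _ _ _ => by positivity)
    intro s hs
    simp only [Finset.mem_filter, Finset.mem_univ, true_and] at hs
    have h4 : t ^ 2 ≤ |⟪sgv d s, l • w⟫| := by
      rw [inner_smul_right, abs_mul, abs_of_nonneg hl0]
      calc t ^ 2 = l * (t / √d * ‖w‖) := by rw [hl]; field_simp
        _ ≤ _ := by gcongr
    rcases le_total 0 ⟪sgv d s, l • w⟫ with h | h
    · rw [abs_of_nonneg h] at h4
      have := Real.exp_le_exp.mpr h4
      linarith [Real.exp_pos (-⟪sgv d s, l • w⟫)]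
    · rw [abs_of_nonpos h] at h4
      have := Real.exp_le_exp.mpr h4
      linarith [Real.exp_pos (⟪sgv d s, l • w⟫)]
  rw [Finset.sum_add_distrib] at h3
  have h5 : Real.exp (-(t ^ 2 / 2)) = Real.exp (t ^ 2 / 2) / Real.exp (t ^ 2) := by
    rw [← Real.exp_sub]; congr 1; ring
  rw [h5, mul_div_assoc', le_div_iff₀ (Real.exp_pos _)]
  linarith

lemma sgv_second {d : ℕ} (hd : 0 < d) (e : EuclideanSpace ℝ (Fin d)) (he : ‖e‖ = 1) :
    ∑ s : Fin d → Bool, ⟪sgv d s, e⟫ ^ 2 ≤ 2 ^ d * (7 / d) := by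
  have hd' : (0 : ℝ) < d := by exact_mod_cast hd
  have hsd : 0 < √(d : ℝ) := Real.sqrt_pos.mpr hd'
  have hn : ‖√(d : ℝ) • e‖ ^ 2 / (2 * d) = 1 / 2 := by
    rw [norm_smul, Real.norm_eq_abs, abs_of_nonneg hsd.le, he, mul_one, Real.sq_sqrt hd'.le]; field_simp
  have h1 := sgv_mgf hd (√(d : ℝ) • e)
  have h2 := sgv_neg_sum hd (√(d : ℝ) • e)
  rw [hn] at h1 h2
  have h3 : ∀ x : ℝ, x ^ 2 ≤ 2 * (Real.exp x + Real.exp (-x)) := by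
    intro x
    rcases le_total 0 x with h | h
    · have := Real.quadratic_le_exp_of_nonneg h
      nlinarith [Real.exp_pos (-x)]
    · have := Real.quadratic_le_exp_of_nonneg (neg_nonneg.mpr h)
      nlinarith [Real.exp_pos (x)]
  have h4 : ∀ s : Fin d → Bool, ⟪sgv d s, e⟫ ^ 2 ≤
      (2 / d) * (Real.exp ⟪sgv d s, √(d : ℝ) • e⟫ + Real.exp (-⟪sgv d s, √(d : ℝ) • e⟫)) := by
    intro s
    have := h3 ⟪sgv d s, √(d : ℝ) • e⟫
    have h5 : ⟪sgv d s, √(d : ℝ) • e⟫ ^ 2 = d * ⟪sgv d s, e⟫ ^ 2 := by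
      rw [inner_smul_right, mul_pow, Real.sq_sqrt hd'.le]
    rw [h5] at this
    rw [div_mul_eq_mul_div, le_div_iff₀ hd']; linarith
  have h6 : Real.exp (1 / 2) ≤ 7 / 4 := by
    have h7 : Real.exp (1 / 2) ^ 2 = Real.exp 1 := by rw [← Real.exp_nat_mul]; norm_num
    have := Real.exp_one_lt_d9
    nlinarith [Real.exp_pos (1 / 2)]
  calc _ ≤ ∑ s : Fin d → Bool, (2 / d) * (Real.exp ⟪sgv d s, √(d : ℝ) • e⟫ + Real.exp (-⟪sgv d s, √(d : ℝ) • e⟫)) :=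
        Finset.sum_le_sum fun s _ => h4 s
    _ ≤ (2 / d) * (2 ^ d * Real.exp (1 / 2) + 2 ^ d * Real.exp (1 / 2)) := by
        rw [← Finset.mul_sum, Finset.sum_add_distrib]; gcongr
    _ ≤ (2 / d) * (2 ^ d * (7 / 4) + 2 ^ d * (7 / 4)) := by gcongr
    _ = _ := by ring

/-- Pairs of sign vectors that are close are rare. -/
lemma sgv_close {d : ℕ} (hd : 0 < d) :
    ((Finset.univ.filter fun p : (Fin d → Bool) × (Fin d → Bool) =>
      ‖sgv d p.1 - sgv d p.2‖ ^ 2 < 1 / 2).card : ℝ) ≤ (0.76 : ℝ) ^ d * 4 ^ d := by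
  have hd' : (0 : ℝ) < d := by exact_mod_cast hd
  set c : Bool → Bool → ℝ := fun a b => if a = b then 1 else 1 / 16 with hc
  have hsum : ∑ p : (Fin d → Bool) × (Fin d → Bool), ∏ i, c (p.1 i) (p.2 i) = (17 / 8) ^ d := by
    rw [Fintype.sum_prod_type]
    have : ∀ x : Fin d → Bool, ∑ y : Fin d → Bool, ∏ i, c (x i) (y i) = (17 / 16) ^ d := by
      intro x
      rw [← Fintype.prod_sum (fun i b => c (x i) b)]
      have : ∀ i, ∑ b, c (x i) b = 17 / 16 := by
        intro i; cases x i <;> simp [hc] <;> norm_num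
      simp only [this, Finset.prod_const, Finset.card_univ, Fintype.card_fin]
    simp only [this]
    simp
    rw [← mul_pow]; norm_num
  have key : ∀ p ∈ (Finset.univ.filter fun p : (Fin d → Bool) × (Fin d → Bool) =>
      ‖sgv d p.1 - sgv d p.2‖ ^ 2 < 1 / 2), (0.707 : ℝ) ^ d ≤ ∏ i, c (p.1 i) (p.2 i) := by
    intro p hp
    simp only [Finset.mem_filter, Finset.mem_univ, true_and] at hp
    set D := Finset.univ.filter fun i => p.1 i ≠ p.2 i with hD
    have h1 : ‖sgv d p.1 - sgv d p.2‖ ^ 2 = D.card * (4 / d) := by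
      rw [EuclideanSpace.norm_sq_eq]
      have : ∀ i, ‖(sgv d p.1 - sgv d p.2) i‖ ^ 2 = if p.1 i ≠ p.2 i then (4 / d : ℝ) else 0 := by
        intro i
        rw [Real.norm_eq_abs, sq_abs]
        simp only [sgv, PiLp.sub_apply]
        rw [← sub_div, div_pow, Real.sq_sqrt hd'.le]
        cases p.1 i <;> cases p.2 i <;> simp <;> norm_num
      simp_rw [this]
      rw [← Finset.sum_filter]
      simp [hD]
    have h2 : ∏ i, c (p.1 i) (p.2 i) = (1 / 16) ^ D.card := by
      simp only [hc]
      rw [Finset.prod_ite]; simp [hD]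
    rw [h1, ← mul_div_assoc, div_lt_iff₀ hd'] at hp
    have h3 : 8 * D.card ≤ d := by
      have : (8 * D.card : ℝ) ≤ d := by linarith
      exact_mod_cast this
    rw [h2]
    calc (0.707 : ℝ) ^ d ≤ (0.707 : ℝ) ^ (8 * D.card) :=
          pow_le_pow_of_le_one (by norm_num) (by norm_num) h3
      _ = ((0.707 : ℝ) ^ 8) ^ D.card := by rw [pow_mul]
      _ ≤ _ := by gcongr; norm_num
  have h := Finset.card_nsmul_le_sum _ _ _ key
  rw [nsmul_eq_mul] at h
  have h' := h.trans (Finset.sum_le_sum_of_subset_of_nonneg (Finset.subset_univ _) fun p _ _ =>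
    Finset.prod_nonneg fun i _ => by simp only [hc]; split_ifs <;> norm_num)
  rw [hsum] at h'
  have h0 : (0 : ℝ) < 0.707 ^ d := by positivity
  have : (17 / 8 : ℝ) ^ d ≤ (0.76 : ℝ) ^ d * 4 ^ d * 0.707 ^ d := by
    rw [← mul_pow, ← mul_pow]; gcongr; norm_num
  exact le_of_mul_le_mul_right (h'.trans this) h0

open scoped RealInnerProductSpace

lemma starProj_norm_sq {d : ℕ} (U : Submodule ℝ (EuclideanSpace ℝ (Fin d)))
    (v : EuclideanSpace ℝ (Fin d)) :
    ‖U.starProjection v‖ ^ 2 = ∑ i, ⟪v, ((stdOrthonormalBasis ℝ U i : U) : EuclideanSpace ℝ (Fin d))⟫ ^ 2 := by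
  have h := (stdOrthonormalBasis ℝ U).sum_sq_norm_inner_right (U.orthogonalProjectionOnto v)
  rw [Submodule.starProjection_apply, ← Submodule.coe_norm, ← h]
  refine Finset.sum_congr rfl fun i _ => ?_
  rw [Real.norm_eq_abs, sq_abs, Submodule.coe_inner, real_inner_comm]
  congr 1
  rw [← Submodule.starProjection_apply]
  rw [Submodule.inner_starProjection_left_eq_right]
  rw [Submodule.starProjection_eq_self_iff.mpr (Submodule.coe_mem _)]

lemma sgv_proj_tail {d : ℕ} (hd : 0 < d) (U : Submodule ℝ (EuclideanSpace ℝ (Fin d))) :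
    ((Finset.univ.filter fun s : Fin d → Bool =>
      28 * (Module.finrank ℝ U : ℝ) / d < ‖U.starProjection (sgv d s)‖ ^ 2).card : ℝ) ≤ 2 ^ d / 4 := by
  have hd' : (0 : ℝ) < d := by exact_mod_cast hd
  set r := Module.finrank ℝ U with hr
  have hsum : ∑ s : Fin d → Bool, ‖U.starProjection (sgv d s)‖ ^ 2 ≤ r * (2 ^ d * (7 / d)) := by
    simp_rw [starProj_norm_sq]
    rw [Finset.sum_comm]
    have : ∀ i ∈ (Finset.univ : Finset (Fin (Module.finrank ℝ U))), ∑ s : Fin d → Bool,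
        ⟪sgv d s, ((stdOrthonormalBasis ℝ U i : U) : EuclideanSpace ℝ (Fin d))⟫ ^ 2 ≤ 2 ^ d * (7 / d) := by
      intro i _
      apply sgv_second hd
      have := (stdOrthonormalBasis ℝ U).orthonormal.1 i
      rwa [Submodule.coe_norm] at this
    have := Finset.sum_le_card_nsmul _ _ _ this
    simpa [hr] using this
  rcases Nat.eq_zero_or_pos r with h0 | h0
  · have : ∀ s : Fin d → Bool, ¬ (28 * (r : ℝ) / d < ‖U.starProjection (sgv d s)‖ ^ 2) := by
      intro s hs
      have h1 := Finset.single_le_sum (f := fun s : Fin d → Bool => ‖U.starProjection (sgv d s)‖ ^ 2)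
        (fun _ _ => by positivity) (Finset.mem_univ s)
      rw [h0] at hsum hs
      simp only [Nat.cast_zero, mul_zero, zero_mul, zero_div] at hsum hs
      linarith
    simp only [this, Finset.filter_false, Finset.card_empty, Nat.cast_zero]
    positivity
  · have h0' : (0 : ℝ) < r := by exact_mod_cast h0
    have h := Finset.card_nsmul_le_sum (Finset.univ.filter fun s : Fin d → Bool =>
      28 * (r : ℝ) / d < ‖U.starProjection (sgv d s)‖ ^ 2)
      (fun s : Fin d → Bool => ‖U.starProjection (sgv d s)‖ ^ 2) (28 * (r : ℝ) / d) (by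
        intro s hs
        simp only [Finset.mem_filter, Finset.mem_univ, true_and] at hs
        exact hs.le)
    rw [nsmul_eq_mul] at h
    have h' := (h.trans (Finset.sum_le_sum_of_subset_of_nonneg (Finset.subset_univ _)
      fun _ _ _ => by positivity)).trans hsum
    have h2 : (0 : ℝ) < 28 * r / d := by positivity
    refine le_of_mul_le_mul_right (h'.trans (le_of_eq ?_)) h2
    field_simp; norm_num

open Classical in
/-- Main counting lemma for the adaptively chosen vectors. -/
lemma pair_count {d : ℕ} (hd : 0 < d) (k : ℕ) (W : Finset (EuclideanSpace ℝ (Fin d)))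
    (U S : Submodule ℝ (EuclideanSpace ℝ (Fin d))) (t w : ℝ) (B : ℕ) (ht : 0 ≤ t) (hw : 0 < w)
    (hW : (W.card : ℝ) * (2 * Real.exp (-(t ^ 2 / 2))) ≤ 1 / 4)
    (hU : (Module.finrank ℝ U : ℝ) * 448 ≤ d)
    (hS : Module.finrank ℝ S ≤ k) (hB : 2 / w + 2 ≤ B)
    (hBd : (0.76 : ℝ) ^ d ≤ 1 / (8 * (B : ℝ) ^ k)) :
    (4 : ℝ) ^ d / (8 * (B : ℝ) ^ k) ≤
    ((Finset.univ.filter fun p : (Fin d → Bool) × (Fin d → Bool) =>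
      (∀ x ∈ W, |⟪sgv d p.1 - sgv d p.2, x⟫| ≤ 2 * (t / √d) * ‖x‖) ∧
      (∀ y ∈ S, |⟪sgv d p.1 - sgv d p.2, y⟫| ≤ √k * w * ‖y‖) ∧
      1 / 4 ≤ ‖(sgv d p.1 - sgv d p.2) - U.starProjection (sgv d p.1 - sgv d p.2)‖ ^ 2).card : ℝ) := by
  have hd' : (0 : ℝ) < d := by exact_mod_cast hd
  set r := Module.finrank ℝ U with hr
  set G0 := Finset.univ.filter fun s : Fin d → Bool =>
    (∀ x ∈ W, |⟪sgv d s, x⟫| ≤ t / √d * ‖x‖) ∧ ‖U.starProjection (sgv d s)‖ ^ 2 ≤ 28 * (r : ℝ) / d with hG0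
  have hcG : (2 : ℝ) ^ d / 2 ≤ G0.card := by
    have hsub : (Finset.univ : Finset (Fin d → Bool)) ⊆ G0 ∪
        ((W.biUnion fun x => Finset.univ.filter fun s : Fin d → Bool => t / √d * ‖x‖ < |⟪sgv d s, x⟫|) ∪
        (Finset.univ.filter fun s : Fin d → Bool => 28 * (r : ℝ) / d < ‖U.starProjection (sgv d s)‖ ^ 2)) := by
      intro s _
      simp only [hG0, Finset.mem_union, Finset.mem_filter, Finset.mem_univ, true_and, Finset.mem_biUnion]
      by_contra hcon
      push Not at hcon
      obtain ⟨h1, h2, h3⟩ := hcon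
      exact absurd (h1 h2) (not_lt.mpr h3)
    have hc := Finset.card_le_card hsub
    have hc2 : ((Finset.univ : Finset (Fin d → Bool)).card : ℝ) ≤ G0.card +
      ((W.biUnion fun x => Finset.univ.filter fun s : Fin d → Bool => t / √d * ‖x‖ < |⟪sgv d s, x⟫|).card +
        (Finset.univ.filter fun s : Fin d → Bool => 28 * (r : ℝ) / d < ‖U.starProjection (sgv d s)‖ ^ 2).card) := by
      exact_mod_cast hc.trans ((Finset.card_union_le _ _).trans
        (Nat.add_le_add_left (Finset.card_union_le _ _) _))
    have hb : ((W.biUnion fun x => Finset.univ.filter fun s : Fin d → Bool =>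
        t / √d * ‖x‖ < |⟪sgv d s, x⟫|).card : ℝ) ≤ 2 ^ d / 4 := by
      have h1 : ((W.biUnion fun x => Finset.univ.filter fun s : Fin d → Bool =>
        t / √d * ‖x‖ < |⟪sgv d s, x⟫|).card : ℝ) ≤ ∑ x ∈ W, ((Finset.univ.filter fun s : Fin d → Bool =>
        t / √d * ‖x‖ < |⟪sgv d s, x⟫|).card : ℝ) := by
        exact_mod_cast Finset.card_biUnion_le
      have h2 := Finset.sum_le_card_nsmul W (fun x => ((Finset.univ.filter fun s : Fin d → Bool =>
        t / √d * ‖x‖ < |⟪sgv d s, x⟫|).card : ℝ)) _ (fun x _ => sgv_tail hd x t ht)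
      rw [nsmul_eq_mul] at h2
      have h3 : (W.card : ℝ) * (2 * 2 ^ d * Real.exp (-(t ^ 2 / 2))) =
        (W.card : ℝ) * (2 * Real.exp (-(t ^ 2 / 2))) * 2 ^ d := by ring
      rw [h3] at h2
      have h4 : (W.card : ℝ) * (2 * Real.exp (-(t ^ 2 / 2))) * 2 ^ d ≤ 1 / 4 * 2 ^ d := by gcongr
      linarith
    have hp := sgv_proj_tail hd U
    rw [Finset.card_univ, Fintype.card_fun, Fintype.card_bool, Fintype.card_fin] at hc2
    push_cast at hc2
    linarith
  -- cells
  set b := stdOrthonormalBasis ℝ S with hb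
  set φ : (Fin d → Bool) → (Fin (Module.finrank ℝ S) → ℤ) := fun s i => ⌊⟪sgv d s, ((b i : S) : EuclideanSpace ℝ (Fin d))⟫ / w⌋ with hφ
  set tt : Finset (Fin (Module.finrank ℝ S) → ℤ) := Fintype.piFinset fun _ => Finset.Icc ⌊-1 / w⌋ ⌊1 / w⌋ with htt
  have hbn : ∀ i, ‖((b i : S) : EuclideanSpace ℝ (Fin d))‖ = 1 := by
    intro i
    have := b.orthonormal.1 i
    rwa [Submodule.coe_norm] at this
  have hmaps : Set.MapsTo φ G0 tt := by
    intro s _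
    simp only [htt, Finset.mem_coe, Fintype.mem_piFinset, Finset.mem_Icc]
    intro i
    have h1 := abs_real_inner_le_norm (sgv d s) ((b i : S) : EuclideanSpace ℝ (Fin d))
    rw [hbn, sgv_norm hd, mul_one, abs_le] at h1
    exact ⟨Int.floor_le_floor (by gcongr; exact h1.1), Int.floor_le_floor (by gcongr; exact h1.2)⟩
  have hB1 : (1 : ℝ) ≤ B := by
    have : 0 < 2 / w := by positivity
    linarith
  have htc : (tt.card : ℝ) ≤ (B : ℝ) ^ k := by
    rw [htt, Fintype.card_piFinset]
    simp only [Finset.prod_const, Finset.card_univ, Fintype.card_fin, Int.card_Icc]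
    push_cast
    have h1 : (((⌊1 / w⌋ + 1 - ⌊-1 / w⌋).toNat : ℕ) : ℝ) ≤ B := by
      have hle : ⌊-1 / w⌋ ≤ ⌊1 / w⌋ := Int.floor_le_floor (by gcongr; norm_num)
      have h2 : (((⌊1 / w⌋ + 1 - ⌊-1 / w⌋).toNat : ℕ) : ℝ) = ((⌊1 / w⌋ + 1 - ⌊-1 / w⌋ : ℤ) : ℝ) := by
        rw [← Int.cast_natCast, Int.toNat_of_nonneg (by linarith)]
      rw [h2]; push_cast
      have h3 := Int.floor_le (1 / w)
      have h4 := Int.lt_floor_add_one (-1 / w)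
      have h5 : -1 / w = -(1 / w) := by ring
      rw [h5] at h4 ⊢
      have h6 : 2 / w = 2 * (1 / w) := by ring
      linarith
    calc _ ≤ (B : ℝ) ^ (Module.finrank ℝ S) := by gcongr
      _ ≤ _ := pow_le_pow_right₀ hB1 hS
  set Pr := Finset.univ.filter fun p : (Fin d → Bool) × (Fin d → Bool) =>
    p.1 ∈ G0 ∧ p.2 ∈ G0 ∧ φ p.1 = φ p.2 with hPr
  have hPrc : (4 : ℝ) ^ d / (4 * (B : ℝ) ^ k) ≤ Pr.card := by
    have h1 : G0.card = ∑ c ∈ tt, (G0.filter fun s => φ s = c).card := Finset.card_eq_sum_card_fiberwise hmaps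
    have h2 : Pr.card = ∑ c ∈ tt, (G0.filter fun s => φ s = c).card ^ 2 := by
      rw [Finset.card_eq_sum_card_fiberwise (f := fun p : (Fin d → Bool) × (Fin d → Bool) => φ p.1) (t := tt)]
      · refine Finset.sum_congr rfl fun c _ => ?_
        rw [sq, ← Finset.card_product]
        congr 1
        ext p
        simp only [hPr, Finset.mem_filter, Finset.mem_univ, true_and, Finset.mem_product]
        constructor
        · rintro ⟨⟨h1, h2, h3⟩, h4⟩; exact ⟨⟨h1, h4⟩, h2, h3 ▸ h4⟩
        · rintro ⟨⟨h1, h4⟩, h2, h3⟩; exact ⟨⟨h1, h2, h4.trans h3.symm⟩, h4⟩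
      · intro p hp
        simp only [hPr, Finset.coe_filter, Finset.mem_univ, true_and, Set.mem_ofPred_eq] at hp
        exact hmaps hp.1
    have h3 : ((G0.card : ℝ)) ^ 2 ≤ tt.card * Pr.card := by
      rw [h1, h2]; push_cast
      exact sq_sum_le_card_mul_sum_sq
    have h4 : (4 : ℝ) ^ d / 4 ≤ (G0.card : ℝ) ^ 2 := by
      calc (4 : ℝ) ^ d / 4 = ((2 : ℝ) ^ d / 2) ^ 2 := by
            rw [div_pow, ← pow_mul, mul_comm d 2, pow_mul]; norm_num
        _ ≤ _ := by gcongr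
    have h5 : (tt.card : ℝ) * Pr.card ≤ (B : ℝ) ^ k * Pr.card := by gcongr
    have hBk : (0 : ℝ) < (B : ℝ) ^ k := by positivity
    rw [div_le_iff₀ (by positivity)]
    linarith
  -- remove close pairs
  set Cl := Finset.univ.filter fun p : (Fin d → Bool) × (Fin d → Bool) =>
      ‖sgv d p.1 - sgv d p.2‖ ^ 2 < 1 / 2 with hCl
  have hclose := sgv_close hd
  have hsub : Pr \ Cl ⊆ Finset.univ.filter fun p : (Fin d → Bool) × (Fin d → Bool) =>
      (∀ x ∈ W, |⟪sgv d p.1 - sgv d p.2, x⟫| ≤ 2 * (t / √d) * ‖x‖) ∧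
      (∀ y ∈ S, |⟪sgv d p.1 - sgv d p.2, y⟫| ≤ √k * w * ‖y‖) ∧
      1 / 4 ≤ ‖(sgv d p.1 - sgv d p.2) - U.starProjection (sgv d p.1 - sgv d p.2)‖ ^ 2 := by
    intro p hp
    simp only [Finset.mem_sdiff, hPr, hCl, hG0, Finset.mem_filter, Finset.mem_univ, true_and, not_lt] at hp ⊢
    obtain ⟨⟨⟨h1, h1'⟩, ⟨h2, h2'⟩, h3⟩, h4⟩ := hp
    refine ⟨?_, ?_, ?_⟩
    · intro x hx
      rw [inner_sub_left]
      have := abs_sub ⟪sgv d p.1, x⟫ ⟪sgv d p.2, x⟫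
      linarith [h1 x hx, h2 x hx]
    · intro y hy
      set v := sgv d p.1 - sgv d p.2 with hv
      have hcell : ∀ i, |⟪v, ((b i : S) : EuclideanSpace ℝ (Fin d))⟫| ≤ w := by
        intro i
        have h5 := congrFun h3 i
        simp only [hφ] at h5
        have h6 := Int.abs_sub_lt_one_of_floor_eq_floor h5
        rw [← sub_div, ← inner_sub_left, abs_div, abs_of_pos hw, div_lt_one hw] at h6
        exact h6.le
      have h7 : ⟪v, y⟫ = ⟪S.starProjection v, y⟫ := by
        rw [Submodule.inner_starProjection_left_eq_right, Submodule.starProjection_eq_self_iff.mpr hy]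
      have h8 : ‖S.starProjection v‖ ≤ √k * w := by
        have : ‖S.starProjection v‖ ^ 2 ≤ (√k * w) ^ 2 := by
          rw [starProj_norm_sq, mul_pow, Real.sq_sqrt (by positivity)]
          calc _ ≤ ∑ i : Fin (Module.finrank ℝ S), w ^ 2 := by
                refine Finset.sum_le_sum fun i _ => ?_
                rw [← sq_abs]; gcongr; exact hcell i
            _ = (Module.finrank ℝ S : ℝ) * w ^ 2 := by simp
            _ ≤ _ := by gcongr
        exact le_of_sq_le_sq this (by positivity)
      rw [h7]
      exact (abs_real_inner_le_norm _ _).trans (by gcongr)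
    · set v := sgv d p.1 - sgv d p.2 with hv
      have h5 : ‖v‖ ^ 2 = ‖U.starProjection v‖ ^ 2 + ‖v - U.starProjection v‖ ^ 2 := by
        have hin : ⟪U.starProjection v, v - U.starProjection v⟫ = 0 :=
          Submodule.inner_right_of_mem_orthogonal (U.starProjection_apply_mem v)
            (U.sub_starProjection_mem_orthogonal v)
        have h := norm_add_sq_real (U.starProjection v) (v - U.starProjection v)
        rw [hin, add_sub_cancel] at h
        linarith
      have h6 : ‖U.starProjection v‖ ^ 2 ≤ 1 / 4 := by
        have h7 : U.starProjection v = U.starProjection (sgv d p.1) - U.starProjection (sgv d p.2) := by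
          rw [hv, map_sub]
        have h8 : ‖U.starProjection v‖ ^ 2 ≤ 2 * ‖U.starProjection (sgv d p.1)‖ ^ 2 + 2 * ‖U.starProjection (sgv d p.2)‖ ^ 2 := by
          rw [h7]
          have := norm_sub_le (U.starProjection (sgv d p.1)) (U.starProjection (sgv d p.2))
          nlinarith [sq_nonneg (‖U.starProjection (sgv d p.1)‖ - ‖U.starProjection (sgv d p.2)‖),
            norm_nonneg (U.starProjection (sgv d p.1) - U.starProjection (sgv d p.2)),
            norm_nonneg (U.starProjection (sgv d p.1)), norm_nonneg (U.starProjection (sgv d p.2))]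
        have h9 : 28 * (r : ℝ) / d ≤ 1 / 16 := by
          rw [div_le_iff₀ hd']; linarith
        linarith
      linarith
  have hfin := Finset.card_le_card hsub
  have hsd : (Pr.card : ℝ) ≤ (Pr \ Cl).card + Cl.card := by
    have := Finset.le_card_sdiff Cl Pr
    have h2 : Pr.card ≤ (Pr \ Cl).card + Cl.card := by omega
    exact_mod_cast h2
  have hfin' : ((Pr \ Cl).card : ℝ) ≤ _ := Nat.cast_le.mpr hfin
  refine le_trans ?_ hfin'
  have hBk : (0 : ℝ) < (B : ℝ) ^ k := by positivity
  have h10 : (0.76 : ℝ) ^ d * 4 ^ d ≤ 1 / (8 * (B : ℝ) ^ k) * 4 ^ d := by gcongr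
  have h11 : (4 : ℝ) ^ d / (4 * (B : ℝ) ^ k) = 1 / (8 * (B : ℝ) ^ k) * 4 ^ d + (4 : ℝ) ^ d / (8 * (B : ℝ) ^ k) := by
    field_simp; norm_num
  linarith

open scoped RealInnerProductSpace

/-! ### Part 3: small ball estimate for grid vectors -/

lemma exchange {d : ℕ} (hd : 0 < d) (k : ℕ) (ρ : ℝ) (hρ : 0 < ρ) (x : ℕ → EuclideanSpace ℝ (Fin d))
    (hx : ∀ i < k, ∀ y ∈ Submodule.span ℝ (x '' Set.Iio i), ρ < ‖x i - y‖) :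
    ∀ j ≤ k, ∃ (X : Matrix (Fin d) (Fin d) ℝ) (R : Finset (Fin d)), R.card = j ∧
      (∀ r ∈ R, ∃ i < j, X r = (x i).ofLp) ∧ (∀ r ∉ R, X r = Pi.single r 1) ∧
      (ρ / √d) ^ j ≤ |X.det| := by
  have hd' : (0 : ℝ) < d := by exact_mod_cast hd
  have hsd : 0 < √(d : ℝ) := Real.sqrt_pos.mpr hd'
  intro j
  induction j with
  | zero =>
    intro _
    refine ⟨1, ∅, rfl, by simp, ?_, by simp⟩
    intro r _
    ext c
    simp [Matrix.one_apply, Pi.single_apply, eq_comm]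
  | succ j ih =>
    intro hj
    obtain ⟨X, R, hR, hX1, hX2, hdet⟩ := ih (by omega)
    have hdpos : 0 < |X.det| := lt_of_lt_of_le (by positivity) hdet
    have hdne : IsUnit X.det := isUnit_iff_ne_zero.mpr (abs_pos.mp hdpos)
    set c : Fin d → ℝ := Matrix.vecMul (x j).ofLp X⁻¹ with hc
    have hcx : ∑ r, c r • X r = (x j).ofLp := by
      have h1 : Matrix.vecMul c X = (x j).ofLp := by
        rw [hc, Matrix.vecMul_vecMul, Matrix.nonsing_inv_mul _ hdne, Matrix.vecMul_one]
      rw [← h1, Matrix.vecMul_eq_sum]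
    have hex : ∃ r, r ∉ R ∧ ρ / √d ≤ |c r| := by
      by_contra hcon
      push Not at hcon
      set y : EuclideanSpace ℝ (Fin d) := WithLp.toLp 2 (∑ r ∈ R, c r • X r) with hy
      have hym : y ∈ Submodule.span ℝ (x '' Set.Iio j) := by
        have : y = ∑ r ∈ R, c r • WithLp.toLp 2 (X r) := by
          rw [hy]; ext i; simp
        rw [this]
        refine Submodule.sum_mem _ fun r hr => Submodule.smul_mem _ _ (Submodule.subset_span ?_)
        obtain ⟨i, hi, h⟩ := hX1 r hr
        exact ⟨i, hi, by rw [h]⟩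
      have h1 := hx j (by omega) y hym
      have h2 : ‖x j - y‖ ^ 2 ≤ ρ ^ 2 := by
        rw [EuclideanSpace.norm_sq_eq]
        have h3 : ∀ i, ‖(x j - y) i‖ ^ 2 ≤ (ρ / √d) ^ 2 := by
          intro i
          have h4 : (x j - y) i = ∑ r ∈ Rᶜ, c r * X r i := by
            have h5 := congrFun hcx i
            rw [← Finset.sum_add_sum_compl R] at h5
            simp only [Pi.add_apply, Finset.sum_apply, Pi.smul_apply, smul_eq_mul] at h5
            simp only [hy, PiLp.sub_apply, Finset.sum_apply, Pi.smul_apply, smul_eq_mul]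
            linarith
          have h6 : ∑ r ∈ Rᶜ, c r * X r i = if i ∈ Rᶜ then c i else 0 := by
            rw [← Finset.sum_ite_eq (Rᶜ) i c]
            refine Finset.sum_congr rfl fun r hr => ?_
            rw [hX2 r (Finset.mem_compl.mp hr), Pi.single_apply]
            split_ifs <;> simp
          rw [h4, h6, Real.norm_eq_abs]
          split_ifs with h
          · have := hcon i (Finset.mem_compl.mp h)
            gcongr
          · simp; positivity
        calc _ ≤ ∑ i : Fin d, (ρ / √d) ^ 2 := Finset.sum_le_sum fun i _ => h3 i
          _ = ρ ^ 2 := by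
            rw [Finset.sum_const, Finset.card_univ, Fintype.card_fin, nsmul_eq_mul, div_pow,
              Real.sq_sqrt hd'.le]
            field_simp
      have := le_of_sq_le_sq h2 hρ.le
      linarith
    obtain ⟨r, hr, hcr⟩ := hex
    refine ⟨X.updateRow r (∑ s, c s • X s), insert r R, ?_, ?_, ?_, ?_⟩
    · rw [Finset.card_insert_of_notMem hr, hR]
    · intro s hs
      rcases Finset.mem_insert.mp hs with h | h
      · subst h
        exact ⟨j, by omega, by rw [Matrix.updateRow_self, hcx]⟩
      · obtain ⟨i, hi, h'⟩ := hX1 s h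
        have hne : s ≠ r := by rintro rfl; exact hr h
        exact ⟨i, by omega, by rw [Matrix.updateRow_ne hne, h']⟩
    · intro s hs
      rw [Finset.mem_insert, not_or] at hs
      rw [Matrix.updateRow_ne hs.1, hX2 s hs.2]
    · rw [Matrix.det_updateRow_sum, smul_eq_mul, abs_mul, pow_succ, mul_comm]
      gcongr

open Classical in
lemma small_ball {d : ℕ} (hd : 0 < d) (k L : ℕ) (hL : 0 < L) (ρ B : ℝ) (hρ : 0 < ρ)
    (hB : 2 * √d ≤ B) (x : ℕ → EuclideanSpace ℝ (Fin d)) (hkd : k ≤ d)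
    (hx : ∀ i < k, ∀ y ∈ Submodule.span ℝ (x '' Set.Iio i), ρ < ‖x i - y‖)
    (hn : ∀ i < k, ‖x i‖ ≤ 2) :
    ((Finset.univ.filter fun α : Fin d → Fin L => ∀ i < k, |∑ c, ((α c : ℕ) : ℝ) * x i c| ≤ B).card : ℝ) ≤
      (4 * B * √d / (ρ * L)) ^ k * (L : ℝ) ^ d := by
  have hd' : (0 : ℝ) < d := by exact_mod_cast hd
  have hL' : (0 : ℝ) < L := by exact_mod_cast hL
  have hsd : 0 < √(d : ℝ) := Real.sqrt_pos.mpr hd'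
  have hB0 : 0 < B := by linarith
  obtain ⟨X, R, hR, hX1, hX2, hdet⟩ := exchange hd k ρ hρ x hx k le_rfl
  set C := Finset.univ.filter fun α : Fin d → Fin L => ∀ i < k, |∑ c, ((α c : ℕ) : ℝ) * x i c| ≤ B with hC
  have hdpos : 0 < |X.det| := lt_of_lt_of_le (by positivity) hdet
  set cube : (Fin d → Fin L) → Set (Fin d → ℝ) := fun α =>
    Set.pi Set.univ fun i => Set.Ico ((α i : ℕ) : ℝ) ((α i : ℕ) + 1 : ℝ) with hcube
  set box : Set (Fin d → ℝ) := Set.pi Set.univ fun r => if r ∈ R then Set.Icc (-(2 * B)) (2 * B) else Set.Icc 0 (L : ℝ) with hbox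
  have hsub : (⋃ α ∈ C, cube α) ⊆ (Matrix.toLin' X) ⁻¹' box := by
    intro y hy
    simp only [Set.mem_iUnion] at hy
    obtain ⟨α, hα, hy⟩ := hy
    simp only [hC, Finset.mem_filter, Finset.mem_univ, true_and] at hα
    simp only [hcube, Set.mem_pi, Set.mem_univ, true_implies, Set.mem_Ico] at hy
    simp only [hbox, Set.mem_preimage, Set.mem_pi, Set.mem_univ, true_implies]
    intro r
    rw [Matrix.toLin'_apply]
    split_ifs with h
    · obtain ⟨i, hi, hXi⟩ := hX1 r h
      have h1 : X.mulVec y r = ∑ c, ((α c : ℕ) : ℝ) * x i c + ∑ c, (y c - (α c : ℕ)) * x i c := by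
        rw [Matrix.mulVec, dotProduct, hXi, ← Finset.sum_add_distrib]
        refine Finset.sum_congr rfl fun c _ => ?_
        ring
      set u : EuclideanSpace ℝ (Fin d) := WithLp.toLp 2 (fun c => y c - (α c : ℕ)) with hu
      have h2 : ∑ c, (y c - (α c : ℕ)) * x i c = ⟪u, x i⟫ := by
        simp [hu, PiLp.inner_apply, mul_comm]
      have h3 : ‖u‖ ≤ √d := by
        rw [EuclideanSpace.norm_eq]
        apply Real.sqrt_le_sqrt
        calc _ ≤ ∑ i : Fin d, (1 : ℝ) := by
              refine Finset.sum_le_sum fun c _ => ?_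
              have := hy c
              rw [Real.norm_eq_abs, sq_abs]
              simp only [hu]
              nlinarith [this.1, this.2]
          _ = _ := by simp
      have h4 : |⟪u, x i⟫| ≤ B := by
        refine (abs_real_inner_le_norm _ _).trans ?_
        calc ‖u‖ * ‖x i‖ ≤ √d * 2 := by gcongr; exact hn i hi
          _ ≤ B := by linarith
      rw [Set.mem_Icc, ← abs_le, h1, h2]
      refine (abs_add_le _ _).trans ?_
      linarith [hα i hi]
    · have h1 : X.mulVec y r = y r := by
        rw [Matrix.mulVec, hX2 r h]; simp
      rw [h1]
      have h2 := hy r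
      have h3 : (((α r : ℕ) : ℝ) + 1) ≤ L := by exact_mod_cast (α r).2
      have h4 : (0 : ℝ) ≤ ((α r : ℕ) : ℝ) := by positivity
      exact ⟨by linarith, by linarith⟩
  have hvol1 : MeasureTheory.volume (⋃ α ∈ C, cube α) = C.card := by
    rw [MeasureTheory.measure_biUnion_finset]
    · have : ∀ α : Fin d → Fin L, MeasureTheory.volume (cube α) = 1 := by
        intro α
        rw [hcube, Real.volume_pi_Ico]
        simp
      simp [this]
    · intro α _ β _ hne
      rw [Function.onFun, Set.disjoint_left]
      intro y hy1 hy2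
      apply hne
      funext i
      have h1 := hy1 i (Set.mem_univ _)
      have h2 := hy2 i (Set.mem_univ _)
      simp only [Set.mem_Ico] at h1 h2
      have h3 : ((α i : ℕ) : ℝ) < (β i : ℕ) + 1 := by linarith
      have h4 : ((β i : ℕ) : ℝ) < (α i : ℕ) + 1 := by linarith
      have h5 : (α i : ℕ) < β i + 1 := by exact_mod_cast h3
      have h6 : (β i : ℕ) < α i + 1 := by exact_mod_cast h4
      exact Fin.ext (by omega)
    · intro α _
      exact MeasurableSet.univ_pi fun i => measurableSet_Ico
  have hvolb : MeasureTheory.volume box = ENNReal.ofReal ((4 * B) ^ k * (L : ℝ) ^ (d - k)) := by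
    rw [hbox, MeasureTheory.volume_pi_pi]
    have : ∀ r : Fin d, MeasureTheory.volume (if r ∈ R then Set.Icc (-(2 * B)) (2 * B) else Set.Icc 0 (L : ℝ)) =
        ENNReal.ofReal (if r ∈ R then 4 * B else L) := by
      intro r
      split_ifs
      · rw [Real.volume_Icc]; congr 1; ring
      · rw [Real.volume_Icc]; congr 1; ring
    simp_rw [this]
    rw [← ENNReal.ofReal_prod_of_nonneg (fun i _ => by split_ifs <;> positivity)]
    congr 1
    rw [Finset.prod_ite]
    simp only [Finset.prod_const]
    congr 2
    · simpa using hR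
    · rw [Finset.filter_not, Finset.card_sdiff]; simp [hR]
  have hm := MeasureTheory.measure_mono (μ := MeasureTheory.volume) hsub
  rw [hvol1, MeasureTheory.Measure.addHaar_preimage_linearMap _ (by
    rw [LinearMap.det_toLin']; exact abs_pos.mp hdpos), hvolb, LinearMap.det_toLin',
    ← ENNReal.ofReal_mul (abs_nonneg _)] at hm
  have hm2 : (C.card : ℝ) ≤ |X.det⁻¹| * ((4 * B) ^ k * (L : ℝ) ^ (d - k)) := by
    by_cases h0 : C.card = 0
    · rw [h0, Nat.cast_zero]; positivity
    · exact (ENNReal.natCast_le_ofReal h0).mp hm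
  refine hm2.trans ?_
  have h1 : |X.det⁻¹| ≤ ((ρ / √d) ^ k)⁻¹ := by
    rw [abs_inv]
    exact inv_anti₀ (by positivity) hdet
  have h2 : (L : ℝ) ^ d = (L : ℝ) ^ k * (L : ℝ) ^ (d - k) := by
    rw [← pow_add]; congr 1; omega
  calc _ ≤ ((ρ / √d) ^ k)⁻¹ * ((4 * B) ^ k * (L : ℝ) ^ (d - k)) := by gcongr
    _ = _ := by
      rw [h2, ← inv_pow, inv_div]
      simp only [div_pow, mul_pow]
      field_simp

open scoped RealInnerProductSpace

/-! ### Part 4: the hard functions and their oracles -/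

/-- Parameters of the hard instance. -/
structure Setup (d n : ℕ) where
  a : Fin n → EuclideanSpace ℝ (Fin d)
  η : ℝ
  r : ℝ
  κ : ℝ
  k : ℕ

abbrev Code (n : ℕ) := Option (Fin n × Bool) ⊕ ℕ

namespace Setup

variable {d n : ℕ} (I : Setup d n) (v : ℕ → EuclideanSpace ℝ (Fin d))

noncomputable def off (j : ℕ) : ℝ :=
  10 * I.r * j + (2 * I.κ + 5 * I.r) * (if j = 0 then 0 else (((j - 1) / I.k + 1 : ℕ) : ℝ))

/-- base pieces -/
noncomputable def Fb : Option (Fin n × Bool) → EuclideanSpace ℝ (Fin d) → ℝ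
  | none, x => ‖x‖ - 1
  | some (i, b), x => (if b then (1 : ℝ) else -1) * ⟪I.a i, x⟫ - I.η

noncomputable def Gb : Option (Fin n × Bool) → EuclideanSpace ℝ (Fin d) → EuclideanSpace ℝ (Fin d)
  | none, x => ‖x‖⁻¹ • x
  | some (i, b), _ => (if b then (1 : ℝ) else -1) • I.a i

noncomputable def F : Code n → EuclideanSpace ℝ (Fin d) → ℝ
  | .inl c, x => I.Fb c x
  | .inr j, x => I.η * (⟪v j, x⟫ - I.off j)

noncomputable def Gr : Code n → EuclideanSpace ℝ (Fin d) → EuclideanSpace ℝ (Fin d)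
  | .inl c, x => I.Gb c x
  | .inr j, _ => I.η • v j

noncomputable def selB (x : EuclideanSpace ℝ (Fin d)) : Option (Fin n × Bool) :=
  Classical.choose (Finite.exists_max (fun c => I.Fb c x))

lemma selB_spec (x : EuclideanSpace ℝ (Fin d)) (c : Option (Fin n × Bool)) :
    I.Fb c x ≤ I.Fb (I.selB x) x :=
  Classical.choose_spec (Finite.exists_max (fun c => I.Fb c x)) c

open Classical in
noncomputable def sel : ℕ → EuclideanSpace ℝ (Fin d) → Code n
  | 0, x => .inl (I.selB x)
  | j + 1, x => if I.F v (sel j x) x < I.F v (.inr j) x then .inr j else sel j x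

noncomputable def orc (j : ℕ) (x : EuclideanSpace ℝ (Fin d)) : ℝ × EuclideanSpace ℝ (Fin d) :=
  (I.F v (I.sel v j x) x, I.Gr v (I.sel v j x) x)

variable {v}

lemma sel_congr {v' : ℕ → EuclideanSpace ℝ (Fin d)} (x : EuclideanSpace ℝ (Fin d)) (j : ℕ)
    (h : ∀ i < j, v i = v' i) : I.sel v j x = I.sel v' j x ∧ I.orc v j x = I.orc v' j x := by
  induction j with
  | zero => exact ⟨rfl, rfl⟩
  | succ j ih =>
    obtain ⟨h1, h2⟩ := ih fun i hi => h i (by omega)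
    have h3 : I.F v (I.sel v j x) x = I.F v' (I.sel v' j x) x := (Prod.ext_iff.mp h2).1
    have h4 : I.Gr v (I.sel v j x) x = I.Gr v' (I.sel v' j x) x := (Prod.ext_iff.mp h2).2
    have hj := h j (by omega)
    have h5 : I.F v (.inr j) x = I.F v' (.inr j) x := by simp [F, hj]
    have h6 : I.Gr v (.inr j) x = I.Gr v' (.inr j) x := by simp [Gr, hj]
    simp only [orc, sel, h3, h5]
    split_ifs with hlt
    · exact ⟨rfl, by rw [h5, h6]⟩
    · exact ⟨h1, by rw [h3, h4]⟩

lemma sel_ge_base (j : ℕ) (x : EuclideanSpace ℝ (Fin d)) (c : Option (Fin n × Bool)) :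
    I.Fb c x ≤ I.F v (I.sel v j x) x := by
  induction j with
  | zero => exact I.selB_spec x c
  | succ j ih =>
    simp only [sel]
    split_ifs with h
    · linarith
    · exact ih

lemma sel_ge (j : ℕ) (x : EuclideanSpace ℝ (Fin d)) (i : ℕ) (hi : i < j) :
    I.F v (.inr i) x ≤ I.F v (I.sel v j x) x := by
  induction j with
  | zero => omega
  | succ j ih =>
    simp only [sel]
    rcases Nat.lt_succ_iff_lt_or_eq.mp hi with h1 | h1
    · split_ifs with h
      · linarith [ih h1]
      · exact ih h1
    · subst h1
      split_ifs with h
      · exact le_rfl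
      · linarith

lemma sel_valid (j : ℕ) (x : EuclideanSpace ℝ (Fin d)) :
    (∃ c, I.sel v j x = .inl c) ∨ ∃ i < j, I.sel v j x = .inr i := by
  induction j with
  | zero => exact Or.inl ⟨_, rfl⟩
  | succ j ih =>
    simp only [sel]
    split_ifs with h
    · exact Or.inr ⟨j, by omega, rfl⟩
    · rcases ih with h | ⟨i, hi, h⟩
      · exact Or.inl h
      · exact Or.inr ⟨i, by omega, h⟩

lemma sel_succ_eq {j : ℕ} {x : EuclideanSpace ℝ (Fin d)}
    (h : I.F v (.inr j) x ≤ I.F v (I.sel v j x) x) : I.orc v (j + 1) x = I.orc v j x := by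
  have : I.sel v (j + 1) x = I.sel v j x := by
    simp only [sel]; rw [if_neg (not_lt.mpr h)]
  simp only [orc, this]

lemma F_subgrad (c : Code n) (x y : EuclideanSpace ℝ (Fin d)) :
    I.F v c x + ⟪I.Gr v c x, y - x⟫ ≤ I.F v c y := by
  match c with
  | .inl none =>
    simp only [F, Gr, Fb, Gb]
    rw [inner_smul_left, inner_sub_right, real_inner_self_eq_norm_sq]
    simp only [conj_trivial]
    rcases eq_or_ne ‖x‖ 0 with h | h
    · rw [h]; simp
    · have hx : 0 < ‖x‖ := lt_of_le_of_ne (norm_nonneg _) (Ne.symm h)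
      have h1 := real_inner_le_norm x y
      have h2 : ‖x‖⁻¹ * ⟪x, y⟫ ≤ ‖y‖ := by
        rw [inv_mul_le_iff₀ hx]; exact h1
      have h3 : ‖x‖⁻¹ * ‖x‖ ^ 2 = ‖x‖ := by field_simp
      rw [mul_sub, h3]; linarith
  | .inl (some (i, b)) =>
    simp only [F, Gr, Fb, Gb]
    rw [inner_smul_left, inner_sub_right]
    simp only [conj_trivial]
    linarith
  | .inr j =>
    simp only [F, Gr]
    rw [inner_smul_left, inner_sub_right]
    simp only [conj_trivial]
    linarith

lemma sel_max {N : ℕ} (c : Code n) (hc : (∃ b, c = .inl b) ∨ ∃ i < N, c = .inr i)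
    (x : EuclideanSpace ℝ (Fin d)) : I.F v c x ≤ I.F v (I.sel v N x) x := by
  rcases hc with ⟨b, rfl⟩ | ⟨i, hi, rfl⟩
  · exact I.sel_ge_base N x b
  · exact I.sel_ge N x i hi

lemma orc_first (N : ℕ) : IsFirstOrderOracle (fun x => I.F v (I.sel v N x) x) (I.orc v N) := by
  intro x
  refine ⟨rfl, fun y => ?_⟩
  exact (I.F_subgrad (I.sel v N x) x y).trans (I.sel_max _ (I.sel_valid N x) y)

lemma Gr_norm (hη : 0 < I.η) (hη' : I.η ≤ 1 / 4) (ha : ∀ i, ‖I.a i‖ ≤ 1) (hv : ∀ j, ‖v j‖ ≤ 2)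
    (c : Code n) (x : EuclideanSpace ℝ (Fin d)) : ‖I.Gr v c x‖ ≤ 1 := by
  match c with
  | .inl none =>
    simp only [Gr, Gb]
    rw [norm_smul, norm_inv, norm_norm]
    rcases eq_or_ne ‖x‖ 0 with h | h
    · rw [h]; simp
    · rw [inv_mul_cancel₀ h]
  | .inl (some (i, b)) =>
    simp only [Gr, Gb]
    rw [norm_smul]
    have := ha i
    cases b <;> simpa using this
  | .inr j =>
    simp only [Gr]
    rw [norm_smul, Real.norm_eq_abs, abs_of_pos hη]
    nlinarith [hv j, norm_nonneg (v j)]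

end Setup

lemma convex_of_oracle {d : ℕ} {f : EuclideanSpace ℝ (Fin d) → ℝ}
    {O : EuclideanSpace ℝ (Fin d) → ℝ × EuclideanSpace ℝ (Fin d)}
    (h : IsFirstOrderOracle f O) : ConvexOn ℝ Set.univ f := by
  refine ⟨convex_univ, fun x _ y _ a b ha hb hab => ?_⟩
  set z := a • x + b • y with hz
  have h1 := (h z).2 x
  have h2 := (h z).2 y
  have h3 : a * ⟪(O z).2, x - z⟫ + b * ⟪(O z).2, y - z⟫ = 0 := by
    rw [inner_sub_right, inner_sub_right, hz, inner_add_right, inner_smul_right, inner_smul_right]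
    obtain rfl : b = 1 - a := by linarith
    ring
  simp only [smul_eq_mul]
  have : f z = a * f z + b * f z := by rw [← add_mul, hab, one_mul]
  nlinarith [mul_le_mul_of_nonneg_left h1 ha, mul_le_mul_of_nonneg_left h2 hb]

lemma lip_of_oracle {d : ℕ} {f : EuclideanSpace ℝ (Fin d) → ℝ}
    {O : EuclideanSpace ℝ (Fin d) → ℝ × EuclideanSpace ℝ (Fin d)}
    (h : IsFirstOrderOracle f O) (hO : ∀ x, ‖(O x).2‖ ≤ 1) : LipschitzWith 1 f := by
  refine LipschitzWith.of_le_add fun x y => ?_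
  have h1 := (h x).2 y
  have h2 := abs_real_inner_le_norm (O x).2 (y - x)
  have h3 : ‖(O x).2‖ * ‖y - x‖ ≤ ‖y - x‖ := mul_le_of_le_one_left (norm_nonneg _) (hO x)
  rw [dist_comm, dist_eq_norm]
  have := (abs_le.mp h2).1
  linarith

open scoped RealInnerProductSpace

/-! ### Part 5: exploratory queries and consistency of the oracles -/

namespace Setup

variable {d n M : ℕ} (I : Setup d n) (v : ℕ → EuclideanSpace ℝ (Fin d))
  (alg : MemAlg M (EuclideanSpace ℝ (Fin d)) (ℝ × EuclideanSpace ℝ (Fin d)))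

def Ex (l : List (EuclideanSpace ℝ (Fin d))) (x : EuclideanSpace ℝ (Fin d)) : Prop :=
  ‖x‖ < 2 ∧ (∀ i, |⟪I.a i, x⟫| < 2 * I.η) ∧
    ∀ y ∈ Submodule.span ℝ {z | z ∈ l.drop (l.length / I.k * I.k)}, I.r < ‖x - y‖

open Classical in
noncomputable def expl (x : ℕ → EuclideanSpace ℝ (Fin d)) : ℕ → List (EuclideanSpace ℝ (Fin d))
  | 0 => []
  | t + 1 => if I.Ex (expl x t) (x t) then expl x t ++ [x t] else expl x t

noncomputable def qq (j t : ℕ) : EuclideanSpace ℝ (Fin d) := alg.query (alg.mem (I.orc v j) t)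

noncomputable def Ls (j t : ℕ) : List (EuclideanSpace ℝ (Fin d)) := I.expl (I.qq v alg j) t

noncomputable def SS (T j : ℕ) : Submodule ℝ (EuclideanSpace ℝ (Fin d)) :=
  Submodule.span ℝ {z | z ∈ ((I.Ls v alg j T).take j).drop ((j - 1) / I.k * I.k)}

noncomputable def UU (j : ℕ) : Submodule ℝ (EuclideanSpace ℝ (Fin d)) :=
  Submodule.span ℝ (Set.range I.a ∪ v '' Set.Iio j)

noncomputable def uu (j : ℕ) : EuclideanSpace ℝ (Fin d) := v j - (I.UU v j).starProjection (v j)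

noncomputable def zz : ℕ → EuclideanSpace ℝ (Fin d)
  | 0 => 0
  | j + 1 => zz j + I.uu v j

def Good (T j : ℕ) : Prop :=
  (∀ s < T, |⟪v j, I.qq v alg j s⟫| ≤ I.κ * ‖I.qq v alg j s‖) ∧
  (∀ y ∈ I.SS v alg T j, |⟪v j, y⟫| ≤ I.r * ‖y‖) ∧
  |⟪v j, I.zz v j⟫| ≤ I.κ * ‖I.zz v j‖ ∧
  1 / 4 ≤ ‖I.uu v j‖ ^ 2

variable {v}

/-! congruence lemmas -/

lemma qq_congr {v' : ℕ → EuclideanSpace ℝ (Fin d)} (j : ℕ) (h : ∀ i < j, v i = v' i) :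
    I.qq v alg j = I.qq v' alg j := by
  have : I.orc v j = I.orc v' j := funext fun x => (I.sel_congr x j h).2
  funext t
  simp only [qq, this]

lemma SS_congr {v' : ℕ → EuclideanSpace ℝ (Fin d)} (T j : ℕ) (h : ∀ i < j, v i = v' i) :
    I.SS v alg T j = I.SS v' alg T j := by
  simp only [SS, Ls, I.qq_congr alg j h]

lemma UU_congr {v' : ℕ → EuclideanSpace ℝ (Fin d)} (j : ℕ) (h : ∀ i < j, v i = v' i) :
    I.UU v j = I.UU v' j := by
  simp only [UU]
  congr 2
  exact Set.image_congr fun i hi => h i hi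

lemma starProj_congr {U U' : Submodule ℝ (EuclideanSpace ℝ (Fin d))} (h : U = U') :
    U.starProjection = U'.starProjection := by
  subst h; rfl

lemma zz_congr {v' : ℕ → EuclideanSpace ℝ (Fin d)} (j : ℕ) (h : ∀ i < j, v i = v' i) :
    I.zz v j = I.zz v' j := by
  induction j with
  | zero => rfl
  | succ j ih =>
    simp only [zz, uu]
    rw [ih fun i hi => h i (by omega), starProj_congr (I.UU_congr j fun i hi => h i (by omega)),
      h j (by omega)]

/-! lists -/

lemma expl_mono_list (x : ℕ → EuclideanSpace ℝ (Fin d)) {s t : ℕ} (h : s ≤ t) :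
    I.expl x s <+: I.expl x t := by
  induction t, h using Nat.le_induction with
  | base => exact List.prefix_refl _
  | succ t _ ih =>
    refine ih.trans ?_
    simp only [expl]
    split_ifs
    · exact List.prefix_append _ _
    · exact List.prefix_refl _

lemma expl_len_le (x : ℕ → EuclideanSpace ℝ (Fin d)) (t : ℕ) : (I.expl x t).length ≤ t := by
  induction t with
  | zero => simp [expl]
  | succ t ih =>
    simp only [expl]
    split_ifs
    · simp; omega
    · omega

lemma expl_take (x : ℕ → EuclideanSpace ℝ (Fin d)) {s t : ℕ} (h : s ≤ t) :
    (I.expl x t).take (I.expl x s).length = I.expl x s :=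
  (List.prefix_iff_eq_take.mp (I.expl_mono_list x h)).symm

lemma take_of_pre {α : Type*} {l l' : List α} (h : l <+: l') {j : ℕ} (hj : j ≤ l.length) :
    l'.take j = l.take j := by
  obtain ⟨t, rfl⟩ := h
  rw [List.take_append_of_le_length hj]

/-- after query `s`, the query is near the span of the current window (or trivially answered) -/
lemma near (hk : 0 < I.k) (hr : 0 ≤ I.r) (x : ℕ → EuclideanSpace ℝ (Fin d)) (s : ℕ) (i : ℕ)
    (hi : (I.expl x (s + 1)).length = i) :
    2 ≤ ‖x s‖ ∨ (∃ c, 2 * I.η ≤ |⟪I.a c, x s⟫|) ∨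
      ∃ y ∈ Submodule.span ℝ {z | z ∈ (I.expl x (s + 1)).drop ((i - 1) / I.k * I.k)}, ‖x s - y‖ ≤ I.r := by
  by_cases hE : I.Ex (I.expl x s) (x s)
  · right; right
    refine ⟨x s, Submodule.subset_span ?_, by simpa using hr⟩
    simp only [expl, if_pos hE] at hi ⊢
    simp only [List.length_append, List.length_singleton] at hi
    simp only [Set.mem_ofPred_eq]
    rw [List.drop_append_of_le_length]
    · simp
    · have := Nat.div_mul_le_self (i - 1) I.k
      omega
  · simp only [expl, if_neg hE] at hi ⊢
    rw [Ex] at hE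
    push Not at hE
    by_cases h1 : ‖x s‖ < 2
    · by_cases h2 : ∀ c, |⟪I.a c, x s⟫| < 2 * I.η
      · obtain ⟨y, hy, hy'⟩ := hE h1 h2
        right; right
        refine ⟨y, ?_, hy'⟩
        rw [hi] at hy
        refine Submodule.span_mono ?_ hy
        intro z hz
        simp only [Set.mem_ofPred_eq] at hz ⊢
        refine List.mem_of_mem_drop (i := i / I.k * I.k - (i - 1) / I.k * I.k) ?_
        rw [List.drop_drop]
        convert hz using 2
        have : (i - 1) / I.k * I.k ≤ i / I.k * I.k :=
          Nat.mul_le_mul_right _ (Nat.div_le_div_right (by omega))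
        omega
      · push Not at h2
        exact Or.inr (Or.inl h2)
    · exact Or.inl (not_lt.mp h1)

/-- two consecutive oracles have the same exploratory list -/
lemma chain_step (T j : ℕ)
    (hcons : ∀ s < T, (I.Ls v alg j (s + 1)).length < j →
      I.orc v (j + 1) (I.qq v alg j s) = I.orc v j (I.qq v alg j s)) :
    ∀ t ≤ T, ((I.Ls v alg j t).length < j ∧ alg.mem (I.orc v (j + 1)) t = alg.mem (I.orc v j) t ∧
        I.Ls v alg (j + 1) t = I.Ls v alg j t) ∨
      (j ≤ (I.Ls v alg j t).length ∧ j ≤ (I.Ls v alg (j + 1) t).length ∧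
        (I.Ls v alg (j + 1) t).take j = (I.Ls v alg j t).take j) := by
  intro t
  induction t with
  | zero =>
    intro _
    rcases Nat.eq_zero_or_pos j with h | h
    · right; subst h; simp
    · left; exact ⟨by simpa [Ls, expl] using h, rfl, rfl⟩
  | succ t ih =>
    intro ht
    rcases ih (by omega) with ⟨h1, h2, h3⟩ | ⟨h1, h2, h3⟩
    · have hq : I.qq v alg (j + 1) t = I.qq v alg j t := by simp only [qq, h2]
      have hl : I.Ls v alg (j + 1) (t + 1) = I.Ls v alg j (t + 1) := by
        simp only [Ls, expl] at h3 ⊢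
        rw [h3, hq]
      by_cases hlt : (I.Ls v alg j (t + 1)).length < j
      · left
        refine ⟨hlt, ?_, hl⟩
        have h4 := hcons t (by omega) hlt
        simp only [MemAlg.mem]
        rw [h2]
        simp only [qq] at h4
        rw [h4]
      · right
        rw [hl]
        exact ⟨by omega, by omega, rfl⟩
    · right
      have p1 : I.Ls v alg j t <+: I.Ls v alg j (t + 1) := I.expl_mono_list _ (by omega)
      have p2 : I.Ls v alg (j + 1) t <+: I.Ls v alg (j + 1) (t + 1) := I.expl_mono_list _ (by omega)
      refine ⟨h1.trans p1.length_le, h2.trans p2.length_le, ?_⟩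
      rw [take_of_pre p1 h1, take_of_pre p2 h2, h3]

lemma chain_step' (T j : ℕ)
    (hcons : ∀ s < T, (I.Ls v alg j (s + 1)).length < j →
      I.orc v (j + 1) (I.qq v alg j s) = I.orc v j (I.qq v alg j s)) :
    (I.Ls v alg (j + 1) T).take j = (I.Ls v alg j T).take j := by
  rcases I.chain_step alg T j hcons T le_rfl with ⟨_, _, h⟩ | ⟨_, _, h⟩
  · rw [h]
  · exact h

lemma off_nonneg (hr : 0 ≤ I.r) (hκ : 0 ≤ I.κ) (j : ℕ) : 0 ≤ I.off j := by
  unfold off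
  split_ifs <;> positivity

/-- value lower bound at an early query -/
lemma probe (hk : 0 < I.k) (hr : 0 ≤ I.r) (hr1 : I.r ≤ 1) (hv : ∀ j, ‖v j‖ ≤ 2) (T j : ℕ)
    (hchain : ∀ i ≤ j, (I.Ls v alg j T).take i = (I.Ls v alg i T).take i)
    (s : ℕ) (hs : s < T) (i : ℕ) (hi : (I.Ls v alg j (s + 1)).length = i) (hij : i < j)
    (hG : I.Good v alg T i) :
    2 ≤ ‖I.qq v alg j s‖ ∨ (∃ c, 2 * I.η ≤ |⟪I.a c, I.qq v alg j s⟫|) ∨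
      ∃ y ∈ I.SS v alg T i, ‖I.qq v alg j s - y‖ ≤ I.r ∧ ‖y‖ ≤ 3 ∧
        -(5 * I.r) ≤ ⟪v i, I.qq v alg j s⟫ := by
  set x := I.qq v alg j s with hx
  by_cases h2 : 2 ≤ ‖x‖
  · exact Or.inl h2
  rcases I.near hk hr (I.qq v alg j) s i hi with h | h | ⟨y, hy, hxy⟩
  · exact Or.inl h
  · exact Or.inr (Or.inl h)
  · right; right
    have hl : I.expl (I.qq v alg j) (s + 1) = (I.Ls v alg i T).take i := by
      rw [← hchain i hij.le, ← hi]
      exact (I.expl_take _ (by omega)).symm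
    rw [hl] at hy
    have hyS : y ∈ I.SS v alg T i := hy
    have hyn : ‖y‖ ≤ 3 := by
      have : ‖y‖ ≤ ‖x‖ + ‖x - y‖ := by
        have := norm_sub_le x (x - y)
        simpa using this
      linarith
    refine ⟨y, hyS, hxy, hyn, ?_⟩
    have h3 := hG.2.1 y hyS
    have h4 := abs_real_inner_le_norm (v i) (x - y)
    have h5 : ‖v i‖ * ‖x - y‖ ≤ 2 * I.r := mul_le_mul (hv i) hxy (norm_nonneg _) (by norm_num)
    have h6 : ⟪v i, x⟫ = ⟪v i, y⟫ + ⟪v i, x - y⟫ := by rw [← inner_add_right]; simp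
    have h7 : I.r * ‖y‖ ≤ I.r * 3 := mul_le_mul_of_nonneg_left hyn hr
    have := (abs_le.mp h3).1
    have := (abs_le.mp h4).1
    linarith

lemma Fb_row_ge (c : Fin n) (x : EuclideanSpace ℝ (Fin d)) (N : ℕ) :
    |⟪I.a c, x⟫| - I.η ≤ I.F v (I.sel v N x) x := by
  rcases le_total 0 ⟪I.a c, x⟫ with h | h
  · have := I.sel_ge_base (v := v) N x (some (c, true))
    simp only [Fb, if_true] at this
    rw [abs_of_nonneg h]; linarith
  · have := I.sel_ge_base (v := v) N x (some (c, false))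
    simp only [Fb] at this
    rw [abs_of_nonpos h]; simp at this; linarith

lemma consistent (hk : 0 < I.k) (hr : 0 ≤ I.r) (hr1 : I.r ≤ 1) (hκ : 0 ≤ I.κ) (hκ1 : 2 * I.κ ≤ 1)
    (hη : 0 < I.η) (hη' : I.η ≤ 1 / 4) (hv : ∀ j, ‖v j‖ ≤ 2) (T j : ℕ)
    (hchain : ∀ i ≤ j, (I.Ls v alg j T).take i = (I.Ls v alg i T).take i)
    (hG : ∀ i ≤ j, I.Good v alg T i)
    (s : ℕ) (hs : s < T) (hlen : (I.Ls v alg j (s + 1)).length < j) :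
    I.orc v (j + 1) (I.qq v alg j s) = I.orc v j (I.qq v alg j s) := by
  apply I.sel_succ_eq
  set i := (I.Ls v alg j (s + 1)).length with hi
  have hoff := I.off_nonneg hr hκ j
  have hP := I.probe alg hk hr hr1 hv T j hchain s hs i hi.symm hlen (hG i hlen.le)
  have hvx := (hG j le_rfl).1 s hs
  set x := I.qq v alg j s with hx
  have hF : I.F v (.inr j) x = I.η * (⟪v j, x⟫ - I.off j) := rfl
  by_cases h2 : 2 ≤ ‖x‖
  · have h1 := I.sel_ge_base (v := v) j x none
    simp only [Fb] at h1
    refine le_trans ?_ h1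
    have h3 : ⟪v j, x⟫ ≤ 2 * ‖x‖ := (real_inner_le_norm _ _).trans (by gcongr; exact hv j)
    rw [hF]
    calc _ ≤ I.η * (2 * ‖x‖) := by gcongr; linarith
      _ ≤ 1 / 4 * (2 * ‖x‖) := by gcongr
      _ ≤ _ := by linarith
  · push Not at h2
    have hvx' : ⟪v j, x⟫ ≤ 2 * I.κ := by
      have := (abs_le.mp hvx).2
      nlinarith
    rcases hP with h | ⟨c, hc⟩ | ⟨y, hyS, hxy, hyn, hvi⟩
    · linarith
    · refine le_trans ?_ (I.Fb_row_ge c x j)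
      rw [hF]
      have : I.η * (⟪v j, x⟫ - I.off j) ≤ I.η * 1 := by gcongr; linarith
      linarith
    · refine le_trans ?_ (I.sel_ge j x i hlen)
      rw [hF]
      show _ ≤ I.η * (⟪v i, x⟫ - I.off i)
      refine mul_le_mul_of_nonneg_left ?_ hη.le
      suffices h : ⟪v j, x⟫ + 5 * I.r + I.off i ≤ I.off j by linarith
      by_cases hper : i ≠ 0 ∧ (i - 1) / I.k = (j - 1) / I.k
      · have hyS' : y ∈ I.SS v alg T j := by
          refine Submodule.span_mono ?_ hyS
          intro z hz
          simp only [Set.mem_ofPred_eq] at hz ⊢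
          rw [← hchain i hlen.le, hper.2] at hz
          have : (I.Ls v alg j T).take i <+: (I.Ls v alg j T).take j :=
            List.take_prefix_take_left (by omega)
          obtain ⟨t, ht⟩ := this
          rw [← ht]
          have hl : (j - 1) / I.k * I.k ≤ ((I.Ls v alg j T).take i).length := by
            by_contra hcon
            rw [List.drop_eq_nil_of_le (by omega)] at hz
            simp at hz
          rw [List.drop_append_of_le_length hl]
          exact List.mem_append_left _ hz
        have h3 := (hG j le_rfl).2.1 y hyS'
        have h4 := abs_real_inner_le_norm (v j) (x - y)
        have h5 : ‖v j‖ * ‖x - y‖ ≤ 2 * I.r := mul_le_mul (hv j) hxy (norm_nonneg _) (by norm_num)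
        have h6 : ⟪v j, x⟫ = ⟪v j, y⟫ + ⟪v j, x - y⟫ := by rw [← inner_add_right]; simp
        have h7 : I.r * ‖y‖ ≤ I.r * 3 := mul_le_mul_of_nonneg_left hyn hr
        have := (abs_le.mp h3).2
        have := (abs_le.mp h4).2
        have h8 : I.off j = 10 * I.r * j + (2 * I.κ + 5 * I.r) * (((j - 1) / I.k + 1 : ℕ) : ℝ) := by
          rw [off, if_neg (by omega)]
        have h9 : I.off i = 10 * I.r * i + (2 * I.κ + 5 * I.r) * (((j - 1) / I.k + 1 : ℕ) : ℝ) := by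
          rw [off, if_neg hper.1, hper.2]
        have h10 : (i : ℝ) + 1 ≤ j := by exact_mod_cast hlen
        rw [h8, h9]
        nlinarith
      · have h8 : I.off j = 10 * I.r * j + (2 * I.κ + 5 * I.r) * (((j - 1) / I.k + 1 : ℕ) : ℝ) := by
          rw [off, if_neg (by omega)]
        have h10 : (i : ℝ) ≤ j := by exact_mod_cast hlen.le
        have h11 : I.off i + (2 * I.κ + 5 * I.r) ≤ I.off j := by
          rw [h8, off]
          have hg : 0 ≤ 2 * I.κ + 5 * I.r := by positivity
          split_ifs with h0
          · have h12 : (1 : ℝ) ≤ (((j - 1) / I.k + 1 : ℕ) : ℝ) := by exact_mod_cast Nat.le_add_left _ _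
            nlinarith
          · have h13 : (i - 1) / I.k + 1 ≤ (j - 1) / I.k := by
              have h14 : (i - 1) / I.k ≤ (j - 1) / I.k := Nat.div_le_div_right (by omega)
              have h15 : (i - 1) / I.k ≠ (j - 1) / I.k := fun h => hper ⟨h0, h⟩
              omega
            have h12 : (((i - 1) / I.k + 1 : ℕ) : ℝ) + 1 ≤ (((j - 1) / I.k + 1 : ℕ) : ℝ) := by
              exact_mod_cast Nat.succ_le_succ h13
            nlinarith
        linarith

lemma chain (hk : 0 < I.k) (hr : 0 ≤ I.r) (hr1 : I.r ≤ 1) (hκ : 0 ≤ I.κ) (hκ1 : 2 * I.κ ≤ 1)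
    (hη : 0 < I.η) (hη' : I.η ≤ 1 / 4) (hv : ∀ j, ‖v j‖ ≤ 2) (T j : ℕ)
    (hG : ∀ i < j, I.Good v alg T i) :
    ∀ i ≤ j, (I.Ls v alg j T).take i = (I.Ls v alg i T).take i := by
  induction j with
  | zero => intro i hi; obtain rfl : i = 0 := by omega
            rfl
  | succ j ih =>
    have ih' := ih fun i hi => hG i (by omega)
    have hc := I.chain_step' alg T j (fun s hs hl =>
      I.consistent alg hk hr hr1 hκ hκ1 hη hη' hv T j ih' (fun i hi => hG i (by omega)) s hs hl)
    intro i hi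
    rcases Nat.lt_succ_iff_lt_or_eq.mp (Nat.lt_succ_of_le hi) with h | h
    · rw [← ih' i (by omega)]
      have := congrArg (List.take i) hc
      rwa [List.take_take, List.take_take, min_eq_left (by omega)] at this
    · rw [h]

end Setup

open scoped RealInnerProductSpace

/-! ### Part 6: the minimum value, and the number of exploratory queries -/

namespace Setup

variable {d n M : ℕ} (I : Setup d n) {v : ℕ → EuclideanSpace ℝ (Fin d)}
  (alg : MemAlg M (EuclideanSpace ℝ (Fin d)) (ℝ × EuclideanSpace ℝ (Fin d)))

lemma UU_mono {i j : ℕ} (h : i ≤ j) : I.UU v i ≤ I.UU v j := by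
  refine Submodule.span_mono (Set.union_subset_union_right _ (Set.image_mono ?_))
  exact Set.Iio_subset_Iio h

lemma v_mem_UU {i j : ℕ} (h : i < j) : v i ∈ I.UU v j :=
  Submodule.subset_span (Or.inr ⟨i, h, rfl⟩)

lemma uu_mem (j : ℕ) : I.uu v j ∈ I.UU v (j + 1) :=
  Submodule.sub_mem _ (I.v_mem_UU (Nat.lt_succ_self j))
    (I.UU_mono (Nat.le_succ j) (Submodule.starProjection_apply_mem _ _))

lemma uu_orth (j : ℕ) {y : EuclideanSpace ℝ (Fin d)} (hy : y ∈ I.UU v j) : ⟪y, I.uu v j⟫ = 0 :=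
  Submodule.inner_right_of_mem_orthogonal hy (Submodule.sub_starProjection_mem_orthogonal _)

lemma zz_mem (j : ℕ) : I.zz v j ∈ I.UU v j := by
  induction j with
  | zero => exact Submodule.zero_mem _
  | succ j ih => exact Submodule.add_mem _ (I.UU_mono (Nat.le_succ j) ih) (I.uu_mem j)

lemma v_uu (j : ℕ) : ⟪v j, I.uu v j⟫ = ‖I.uu v j‖ ^ 2 := by
  have h : v j = I.uu v j + (I.UU v j).starProjection (v j) := by simp [uu]
  conv_lhs => rw [h]
  rw [inner_add_left, I.uu_orth j (Submodule.starProjection_apply_mem _ _), real_inner_self_eq_norm_sq]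
  simp [h.symm]

lemma uu_norm (hv : ∀ j, ‖v j‖ ≤ 2) (j : ℕ) : ‖I.uu v j‖ ≤ 2 := by
  have h1 := I.v_uu (v := v) j
  have h2 := real_inner_le_norm (v j) (I.uu v j)
  by_contra hcon
  push Not at hcon
  nlinarith [hv j, norm_nonneg (v j)]

lemma zz_norm (hv : ∀ j, ‖v j‖ ≤ 2) (j : ℕ) : ‖I.zz v j‖ ^ 2 ≤ 4 * j := by
  induction j with
  | zero => simp [zz]
  | succ j ih =>
    simp only [zz]
    rw [norm_add_sq_real, I.uu_orth j (I.zz_mem j)]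
    have := I.uu_norm hv j
    have h0 := norm_nonneg (I.uu v j)
    push_cast
    nlinarith

lemma row_zz (c : Fin n) (j : ℕ) : ⟪I.a c, I.zz v j⟫ = 0 := by
  induction j with
  | zero => simp [zz]
  | succ j ih =>
    simp only [zz]
    rw [inner_add_right, ih, I.uu_orth j (Submodule.subset_span (Or.inl ⟨c, rfl⟩)), add_zero]

lemma v_zz (j N : ℕ) (h : j < N) : ⟪v j, I.zz v N⟫ = ⟪v j, I.zz v j⟫ + ‖I.uu v j‖ ^ 2 := by
  induction N, h using Nat.le_induction with
  | base => simp only [zz]; rw [inner_add_right, I.v_uu]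
  | succ N hN ih =>
    simp only [zz]
    rw [inner_add_right, ih, I.uu_orth N (I.v_mem_UU hN), add_zero]

lemma exists_min (hκ : 0 ≤ I.κ) (hr : 0 ≤ I.r) (hη : 0 < I.η) (hη' : I.η ≤ 1 / 4)
    (hv : ∀ j, ‖v j‖ ≤ 2) (T N : ℕ) (hN : 0 < N)
    (hκN : 2 * I.κ * √N ≤ 1 / 8) (hG : ∀ i < N, I.Good v alg T i) :
    ∃ x : EuclideanSpace ℝ (Fin d), ‖x‖ ≤ 1 ∧ I.F v (I.sel v N x) x ≤ -(I.η / (32 * √N)) := by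
  have hN1 : (1 : ℝ) ≤ N := by exact_mod_cast hN
  have hs1 : 1 ≤ √(N : ℝ) := Real.one_le_sqrt.mpr hN1
  have hs0 : 0 < √(N : ℝ) := by linarith
  have hzn : ∀ j ≤ N, ‖I.zz v j‖ ≤ 2 * √N := by
    intro j hj
    have h1 := I.zz_norm hv j
    have h2 : (j : ℝ) ≤ N := by exact_mod_cast hj
    refine le_of_sq_le_sq ?_ (by positivity)
    rw [mul_pow, Real.sq_sqrt (by positivity)]
    linarith
  set x : EuclideanSpace ℝ (Fin d) := (-(4 * √N)⁻¹) • I.zz v N with hx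
  have hin : ∀ w, ⟪w, x⟫ = -(4 * √N)⁻¹ * ⟪w, I.zz v N⟫ := fun w => by rw [hx, inner_smul_right]
  have hxn : ‖x‖ ≤ 1 / 2 := by
    rw [hx, norm_smul, norm_neg, norm_inv, Real.norm_of_nonneg (by positivity), inv_mul_le_iff₀ (by positivity)]
    linarith [hzn N le_rfl]
  have hηs : I.η / (32 * √N) ≤ I.η / 32 := by
    gcongr; linarith
  refine ⟨x, by linarith, ?_⟩
  rcases I.sel_valid (v := v) N x with ⟨c, hc⟩ | ⟨j, hj, hc⟩
  · rw [hc]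
    match c with
    | none => simp only [F, Fb]; linarith
    | some (i, b) =>
      simp only [F, Fb]
      rw [hin, I.row_zz]
      simp; linarith
  · rw [hc]
    simp only [F]
    have h1 : 1 / 8 ≤ ⟪v j, I.zz v N⟫ := by
      rw [I.v_zz j N hj]
      have h2 := (hG j hj).2.2.1
      have h3 := (hG j hj).2.2.2
      have h4 : I.κ * ‖I.zz v j‖ ≤ I.κ * (2 * √N) := mul_le_mul_of_nonneg_left (hzn j hj.le) hκ
      have := (abs_le.mp h2).1
      linarith
    have h5 : ⟪v j, x⟫ ≤ -(1 / (32 * √N)) := by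
      rw [hin]
      have : (4 * √(N : ℝ))⁻¹ * (1 / 8) ≤ (4 * √N)⁻¹ * ⟪v j, I.zz v N⟫ := by gcongr
      have h6 : (4 * √(N : ℝ))⁻¹ * (1 / 8) = 1 / (32 * √N) := by field_simp; norm_num
      linarith
    have h7 := I.off_nonneg hr hκ j
    calc _ ≤ I.η * (-(1 / (32 * √N))) := by gcongr; linarith
      _ = _ := by ring

/-- the number of exploratory queries is large -/
lemma det_main (hk : 0 < I.k) (hr : 0 ≤ I.r) (hr1 : I.r ≤ 1) (hκ : 0 ≤ I.κ) (hκ1 : 2 * I.κ ≤ 1)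
    (hη : 0 < I.η) (hη' : I.η ≤ 1 / 4) (ha : ∀ i, ‖I.a i‖ ≤ 1) (hv : ∀ j, ‖v j‖ ≤ 2) (T P : ℕ)
    (hT : 1 ≤ T) (ε : ℝ)
    (hκN : 2 * I.κ * √(I.k * P + 1 : ℕ) ≤ 1 / 8) (hG : ∀ i < I.k * P + 1, I.Good v alg T i)
    (hε : ε < I.η * (1 / (32 * √(I.k * P + 1 : ℕ)) - 5 * I.r - (10 * I.r * (I.k * P) + (2 * I.κ + 5 * I.r) * P)))
    (hmin : MinimizesConvex d alg T ε) :
    I.k * P + 1 ≤ (I.Ls v alg (I.k * P + 1) T).length := by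
  set N := I.k * P + 1 with hN
  by_contra hcon
  push Not at hcon
  obtain ⟨x, hx, hfx⟩ := I.exists_min alg hκ hr hη hη' hv T N (by omega) hκN hG
  have hO := I.orc_first (v := v) N
  have hm := (hmin _ (convex_of_oracle hO) (lip_of_oracle hO fun x => I.Gr_norm hη hη' ha hv _ x) _ hO).2 x
    (by simpa using hx)
  have hout : alg.output (I.orc v N) T = I.qq v alg N (T - 1) := rfl
  rw [hout] at hm
  have hm' : I.F v (I.sel v N (I.qq v alg N (T - 1))) (I.qq v alg N (T - 1)) ≤ -(I.η / (32 * √N)) + ε := by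
    linarith
  have hT1 : T - 1 + 1 = T := by omega
  have hch := I.chain alg hk hr hr1 hκ hκ1 hη hη' hv T N hG
  have hp := I.probe alg hk hr hr1 hv T N hch (T - 1) (by omega) _ rfl (by rw [hT1]; exact hcon)
    (hG _ (by rw [hT1]; exact hcon))
  rw [hT1] at hp
  set i := (I.Ls v alg N T).length with hi
  set q := I.qq v alg N (T - 1) with hq
  have hoffi : I.off i ≤ 10 * I.r * (I.k * P) + (2 * I.κ + 5 * I.r) * P := by
    have h1 : i ≤ I.k * P := by omega
    have h1' : (i : ℝ) ≤ I.k * P := by exact_mod_cast h1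
    rw [off]
    have hg : 0 ≤ 2 * I.κ + 5 * I.r := by positivity
    split_ifs with h0
    · have : (0 : ℝ) ≤ P := by positivity
      nlinarith
    · have h2 : (i - 1) / I.k + 1 ≤ P := by
        have : (i - 1) / I.k < P := by
          rw [Nat.div_lt_iff_lt_mul hk, mul_comm]; omega
        omega
      have h2' : (((i - 1) / I.k + 1 : ℕ) : ℝ) ≤ P := by exact_mod_cast h2
      gcongr
  have hlow : -(I.η * (5 * I.r + (10 * I.r * (I.k * P) + (2 * I.κ + 5 * I.r) * P))) ≤
      I.F v (I.sel v N q) q := by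
    have hpos : 0 ≤ I.η * (5 * I.r + (10 * I.r * (I.k * P) + (2 * I.κ + 5 * I.r) * P)) := by positivity
    rcases hp with h | ⟨c, hc⟩ | ⟨y, _, _, _, h⟩
    · have := I.sel_ge_base (v := v) N q none
      simp only [Fb] at this
      linarith
    · have := I.Fb_row_ge (v := v) c q N
      linarith
    · have h3 := I.sel_ge (v := v) N q i hcon
      refine le_trans ?_ h3
      simp only [F]
      rw [← mul_neg]
      gcongr
      linarith
  have h9 : I.η * (1 / (32 * √N) - 5 * I.r - (10 * I.r * (I.k * P) + (2 * I.κ + 5 * I.r) * P)) =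
    I.η / (32 * √N) - I.η * (5 * I.r + (10 * I.r * (I.k * P) + (2 * I.κ + 5 * I.r) * P)) := by ring
  rw [h9] at hε
  linarith

end Setup

open scoped RealInnerProductSpace

/-! ### Part 7: short windows and decoding -/

namespace Setup

variable {d n M : ℕ} (I : Setup d n) {v : ℕ → EuclideanSpace ℝ (Fin d)}
  (alg : MemAlg M (EuclideanSpace ℝ (Fin d)) (ℝ × EuclideanSpace ℝ (Fin d)))

lemma expl_time (x : ℕ → EuclideanSpace ℝ (Fin d)) (T i : ℕ) (hi : i < (I.expl x T).length) :
    ∃ s < T, (I.expl x s).length = i ∧ I.Ex (I.expl x s) (x s) := by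
  induction T with
  | zero => simp [expl] at hi
  | succ T ih =>
    by_cases h : i < (I.expl x T).length
    · obtain ⟨s, hs, h'⟩ := ih h
      exact ⟨s, by omega, h'⟩
    · by_cases hE : I.Ex (I.expl x T) (x T)
      · simp only [expl, if_pos hE, List.length_append, List.length_singleton] at hi
        exact ⟨T, by omega, by omega, hE⟩
      · simp only [expl, if_neg hE] at hi
        omega

lemma window (x : ℕ → EuclideanSpace ℝ (Fin d)) (T P m : ℕ) (hk : 0 < I.k)
    (hlen : I.k * P + 1 ≤ (I.expl x T).length) (hT : T ≤ P * m) :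
    ∃ t0, ∃ σ : ℕ → ℕ, (∀ i < I.k, σ i < m) ∧ ∀ i < I.k, ‖x (t0 + σ i)‖ < 2 ∧
      (∀ c, |⟪I.a c, x (t0 + σ i)⟫| < 2 * I.η) ∧
      ∀ y ∈ Submodule.span ℝ ((fun j => x (t0 + σ j)) '' Set.Iio i), I.r < ‖x (t0 + σ i) - y‖ := by
  have h0 : ∀ i, ∃ s, i < (I.expl x T).length →
      (s < T ∧ (I.expl x s).length = i ∧ I.Ex (I.expl x s) (x s)) := by
    intro i
    by_cases h : i < (I.expl x T).length
    · obtain ⟨s, hs⟩ := I.expl_time x T i h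
      exact ⟨s, fun _ => hs⟩
    · exact ⟨0, fun h' => absurd h' h⟩
  choose tt htt using h0
  have hmono : ∀ i j, i < j → j < (I.expl x T).length → tt i < tt j := by
    intro i j hij hj
    by_contra hcon
    have h1 := (I.expl_mono_list x (not_lt.mp hcon)).length_le
    rw [(htt i (by omega)).2.1, (htt j hj).2.1] at h1
    omega
  have hget : ∀ i j, i < j → j < (I.expl x T).length → (I.expl x (tt j))[i]? = some (x (tt i)) := by
    intro i j hij hj
    have h1 := hmono i j hij hj
    obtain ⟨l, hl⟩ := I.expl_mono_list x (Nat.succ_le_of_lt h1)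
    have h2 := htt i (by omega)
    rw [← hl]
    simp only [expl, if_pos h2.2.2]
    rw [List.append_assoc, List.getElem?_append_right (by omega), h2.2.1]
    simp
  have hex : ∃ p < P, tt (p * I.k + (I.k - 1)) < tt (p * I.k) + m := by
    by_contra hcon
    push Not at hcon
    have hstep : ∀ p ≤ P, p * m ≤ tt (p * I.k) := by
      intro p
      induction p with
      | zero => simp
      | succ p ih =>
        intro hp
        have h1 := ih (by omega)
        have h2 := hcon p (by omega)
        have h3 : (p + 1) * I.k ≤ I.k * P := by rw [mul_comm]; exact Nat.mul_le_mul_left _ hp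
        have h4 := hmono (p * I.k + (I.k - 1)) ((p + 1) * I.k) (by rw [Nat.add_mul]; omega) (by omega)
        rw [Nat.add_mul]
        omega
    have h1 := hstep P le_rfl
    have h2 := (htt (P * I.k) (by rw [mul_comm]; omega)).1
    omega
  obtain ⟨p, hp, hwin⟩ := hex
  have hpk : ∀ i < I.k, p * I.k + i < (I.expl x T).length := by
    intro i hi
    have : (p + 1) * I.k ≤ I.k * P := by rw [mul_comm]; exact Nat.mul_le_mul_left _ hp
    rw [Nat.add_mul] at this
    omega
  have hle : ∀ i < I.k, tt (p * I.k) ≤ tt (p * I.k + i) ∧ tt (p * I.k + i) ≤ tt (p * I.k + (I.k - 1)) := by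
    intro i hi
    constructor
    · rcases Nat.eq_zero_or_pos i with h | h
      · subst h; simp
      · exact (hmono _ _ (by omega) (hpk i hi)).le
    · rcases Nat.lt_or_ge i (I.k - 1) with h | h
      · exact (hmono _ _ (by omega) (hpk (I.k - 1) (by omega))).le
      · rw [show i = I.k - 1 by omega]
  refine ⟨tt (p * I.k), fun i => tt (p * I.k + i) - tt (p * I.k), ?_, ?_⟩
  · intro i hi
    have := hle i hi
    simp only
    omega
  · intro i hi
    have heq : ∀ j < I.k, tt (p * I.k) + (tt (p * I.k + j) - tt (p * I.k)) = tt (p * I.k + j) := by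
      intro j hj
      have := hle j hj
      omega
    simp only
    rw [heq i hi]
    obtain ⟨_, h1, h2, h3, h4⟩ := htt (p * I.k + i) (hpk i hi)
    refine ⟨h2, h3, fun y hy => h4 y (Submodule.span_mono ?_ hy)⟩
    rintro _ ⟨j, hj, rfl⟩
    simp only [Set.mem_Iio] at hj
    simp only [Set.mem_ofPred_eq]
    rw [heq j (by omega), h1]
    have h5 : (p * I.k + i) / I.k * I.k = p * I.k := by
      rw [mul_comm p, Nat.mul_add_div hk, Nat.div_eq_of_lt hi, add_zero, mul_comm]
    rw [h5]
    apply List.mem_of_getElem? (i := j)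
    rw [List.getElem?_drop]
    exact hget _ _ (by omega) (hpk i hi)

/-- memory states decoded from the initial memory and the codes of the answers -/
noncomputable def dec (v : ℕ → EuclideanSpace ℝ (Fin d)) (μ : Fin M → Bool) (c : ℕ → Code n) : ℕ → (Fin M → Bool)
  | 0 => μ
  | s + 1 => alg.update (dec v μ c s) (alg.query (dec v μ c s))
      (I.F v (c s) (alg.query (dec v μ c s)), I.Gr v (c s) (alg.query (dec v μ c s)))

lemma mem_eq_dec (N t0 m : ℕ) (c : ℕ → Code n)
    (hc : ∀ s < m, c s = I.sel v N (I.qq v alg N (t0 + s))) :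
    ∀ s ≤ m, alg.mem (I.orc v N) (t0 + s) = I.dec alg v (alg.mem (I.orc v N) t0) c s := by
  intro s
  induction s with
  | zero => intro _; rfl
  | succ s ih =>
    intro hs
    have h1 := ih (by omega)
    have h2 := hc s (by omega)
    rw [← Nat.add_assoc]
    simp only [MemAlg.mem, dec]
    rw [← h1, h2]
    rfl

lemma dec_congr (I' : Setup d n) (hη : I'.η = I.η) (hr : I'.r = I.r) (hκ : I'.κ = I.κ)
    (hk : I'.k = I.k) (μ : Fin M → Bool) (c : ℕ → Code n) (m : ℕ)
    (hc : ∀ s < m, ∀ i b, c s = .inl (some (i, b)) → I'.a i = I.a i) :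
    ∀ s ≤ m, I'.dec alg v μ c s = I.dec alg v μ c s := by
  intro s
  induction s with
  | zero => intro _; rfl
  | succ s ih =>
    intro hs
    have h1 := ih (by omega)
    have h2 : ∀ x, I'.F v (c s) x = I.F v (c s) x ∧ I'.Gr v (c s) x = I.Gr v (c s) x := by
      intro x
      have h3 := hc s (by omega)
      match hcs : c s with
      | .inl none => exact ⟨rfl, rfl⟩
      | .inl (some (i, b)) =>
        have := h3 i b hcs
        simp only [F, Gr, Fb, Gb, this, hη, and_self]
      | .inr j => simp only [F, Gr, off, hη, hr, hκ, hk, and_self]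
    simp only [dec]
    rw [h1, (h2 _).1, (h2 _).2]

/-- the condition satisfied by decoded queries of a short window -/
def BadP (v : ℕ → EuclideanSpace ℝ (Fin d)) (μ : Fin M → Bool) (c : ℕ → Code n) (σ : ℕ → ℕ) : Prop :=
  ∀ i < I.k, ‖alg.query (I.dec alg v μ c (σ i))‖ < 2 ∧
      (∀ r, |⟪I.a r, alg.query (I.dec alg v μ c (σ i))⟫| < 2 * I.η) ∧
      ∀ y ∈ Submodule.span ℝ ((fun j => alg.query (I.dec alg v μ c (σ j))) '' Set.Iio i),
        I.r < ‖alg.query (I.dec alg v μ c (σ i)) - y‖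

/-- extension of finite codes -/
def cext {n N m : ℕ} (c : Fin m → Option (Fin n × Bool) ⊕ Fin N) (s : ℕ) : Code n :=
  if h : s < m then Sum.map id Fin.val (c ⟨s, h⟩) else .inl none

def sext {k m : ℕ} (σ : Fin k → Fin m) (i : ℕ) : ℕ := if h : i < k then σ ⟨i, h⟩ else 0

lemma bad_of_len (T P m N : ℕ) (hk : 0 < I.k)
    (hlen : I.k * P + 1 ≤ (I.Ls v alg N T).length) (hT : T ≤ P * m) :
    ∃ (μ : Fin M → Bool) (c : Fin m → Option (Fin n × Bool) ⊕ Fin N) (σ : Fin I.k → Fin m),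
      I.BadP alg v μ (cext c) (sext σ) := by
  obtain ⟨t0, σ, hσ, h⟩ := I.window (I.qq v alg N) T P m hk hlen hT
  have hcode : ∀ x, ∃ c : Option (Fin n × Bool) ⊕ Fin N, Sum.map id Fin.val c = I.sel v N x := by
    intro x
    rcases I.sel_valid (v := v) N x with ⟨c, hc⟩ | ⟨j, hj, hc⟩
    · exact ⟨.inl c, by rw [hc]; rfl⟩
    · exact ⟨.inr ⟨j, hj⟩, by rw [hc]; rfl⟩
  choose g hg using hcode
  refine ⟨alg.mem (I.orc v N) t0, fun s => g (I.qq v alg N (t0 + s)), fun i => ⟨σ i, hσ i i.2⟩, ?_⟩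
  have hd := I.mem_eq_dec (v := v) alg N t0 m (cext fun s : Fin m => g (I.qq v alg N (t0 + s))) (by
    intro s hs
    simp only [cext, dif_pos hs, hg])
  have hq : ∀ i < I.k, alg.query (I.dec alg v (alg.mem (I.orc v N) t0)
      (cext fun s : Fin m => g (I.qq v alg N (t0 + s))) (sext (fun i => (⟨σ i, hσ i i.2⟩ : Fin m)) i)) =
      I.qq v alg N (t0 + σ i) := by
    intro i hi
    simp only [sext, dif_pos hi]
    rw [← hd _ (hσ i hi).le]
    rfl
  intro i hi
  rw [hq i hi]
  refine ⟨(h i hi).1, (h i hi).2.1, fun y hy => (h i hi).2.2 y ?_⟩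
  convert hy using 2
  refine Set.image_congr fun j hj => ?_
  simp only [Set.mem_Iio] at hj
  exact (hq j (by omega)).symm

end Setup

/-! counting -/

lemma fiber_count {n : ℕ} {X : Type*} [Fintype X] [DecidableEq X] (R : Finset (Fin n))
    (B : Finset (Fin n → X)) (K : ℝ) (hK : 0 ≤ K)
    (hfib : ∀ A0 ∈ B, ∃ C : Finset X, (C.card : ℝ) ≤ K ∧
      ∀ A ∈ B, (∀ i ∈ R, A i = A0 i) → ∀ i, A i ∈ C) :
    (B.card : ℝ) ≤ K ^ (n - R.card) * (Fintype.card X : ℝ) ^ R.card := by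
  classical
  set f : (Fin n → X) → (R → X) := fun A i => A i with hf
  have h1 : ∀ b ∈ B.image f, (B.filter fun A => f A = b).card ≤ ⌊K ^ (n - R.card)⌋₊ := by
    intro b hb
    obtain ⟨A0, hA0, rfl⟩ := Finset.mem_image.mp hb
    obtain ⟨C, hC, h⟩ := hfib A0 hA0
    apply Nat.le_floor
    have hsub : (B.filter fun A => f A = f A0) ⊆ Fintype.piFinset (fun i => if i ∈ R then {A0 i} else C) := by
      intro A hA
      rw [Finset.mem_filter] at hA
      have heq : ∀ i ∈ R, A i = A0 i := fun i hi => congrFun hA.2 ⟨i, hi⟩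
      rw [Fintype.mem_piFinset]
      intro i
      split_ifs with hi
      · rw [Finset.mem_singleton]; exact heq i hi
      · exact h A hA.1 heq i
    have h2 := Finset.card_le_card hsub
    rw [Fintype.card_piFinset] at h2
    have h3 : ∏ i, (if i ∈ R then ({A0 i} : Finset X) else C).card = C.card ^ (n - R.card) := by
      have : ∀ i, (if i ∈ R then ({A0 i} : Finset X) else C).card = if i ∈ R then 1 else C.card := by
        intro i; split_ifs <;> simp
      simp_rw [this]
      rw [Finset.prod_ite]
      simp only [Finset.prod_const, one_pow, one_mul]
      congr 1
      rw [Finset.filter_not, Finset.card_sdiff]; simp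
    rw [h3] at h2
    calc _ ≤ ((C.card ^ (n - R.card) : ℕ) : ℝ) := by exact_mod_cast h2
      _ ≤ _ := by push_cast; gcongr
  have h2 := Finset.card_le_mul_card_image B _ h1
  have h3 : (B.image f).card ≤ Fintype.card X ^ R.card := by
    refine (Finset.card_le_univ _).trans ?_
    simp
  calc (B.card : ℝ) ≤ (⌊K ^ (n - R.card)⌋₊ * (B.image f).card : ℕ) := by exact_mod_cast h2
    _ = (⌊K ^ (n - R.card)⌋₊ : ℝ) * (B.image f).card := by push_cast; ring
    _ ≤ _ := by
      gcongr
      · exact Nat.floor_le (by positivity)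
      · exact_mod_cast h3

lemma double_count {α β : Type*} [Fintype α] [Fintype β] (p : α → β → Prop)
    [∀ a b, Decidable (p a b)] (x y : ℝ)
    (h1 : ∀ a, x ≤ (Finset.univ.filter fun b => p a b).card)
    (h2 : ∀ b, ((Finset.univ.filter fun a => p a b).card : ℝ) ≤ y) :
    Fintype.card α * x ≤ Fintype.card β * y := by
  have h3 : ∑ a : α, (Finset.univ.filter fun b => p a b).card =
      ∑ b : β, (Finset.univ.filter fun a => p a b).card := by
    simp only [Finset.card_filter]
    exact Finset.sum_comm
  have h4 : (∑ a : α, ((Finset.univ.filter fun b => p a b).card : ℝ)) =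
      ∑ b : β, ((Finset.univ.filter fun a => p a b).card : ℝ) := by exact_mod_cast h3
  calc Fintype.card α * x = ∑ a : α, x := by simp
    _ ≤ _ := Finset.sum_le_sum fun a _ => h1 a
    _ = _ := h4
    _ ≤ ∑ b : β, y := Finset.sum_le_sum fun b _ => h2 b
    _ = _ := by simp

open scoped RealInnerProductSpace

/-! ### Part 8: counting good and bad instances -/

def vext {Ω : Type*} (ω0 : Ω) {K : ℕ} (V : Fin K → Ω) (i : ℕ) : Ω := if h : i < K then V ⟨i, h⟩ else ω0

lemma vext_snoc {Ω : Type*} (ω0 : Ω) {K : ℕ} (V : Fin K → Ω) (ω : Ω) :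
    vext ω0 (Fin.snoc (α := fun _ => Ω) V ω) = Function.update (vext ω0 V) K ω := by
  funext i
  rcases Nat.lt_trichotomy i K with h | h | h
  · rw [Function.update_of_ne (by omega)]
    simp only [vext, dif_pos h, dif_pos (show i < K + 1 by omega)]
    simp [Fin.snoc, h]
  · subst h
    simp [vext, Fin.snoc]
  · rw [Function.update_of_ne (by omega)]
    simp only [vext, dif_neg (show ¬ i < K by omega), dif_neg (show ¬ i < K + 1 by omega)]

open Classical in
lemma leaf_count {Ω : Type*} [Fintype Ω] (ω0 : Ω) (G : ℕ → (ℕ → Ω) → Prop)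
    (hG : ∀ j V V', (∀ i ≤ j, V i = V' i) → G j V → G j V') (g : ℝ) (hg : 0 ≤ g) (N : ℕ)
    (hc : ∀ j < N, ∀ V, g ≤ (Finset.univ.filter fun ω => G j (Function.update V j ω)).card) :
    ∀ K ≤ N, g ^ K ≤ (Finset.univ.filter fun V : Fin K → Ω => ∀ j < K, G j (vext ω0 V)).card := by
  intro K
  induction K with
  | zero => intro _; simp
  | succ K ih =>
    intro hK
    set A := Finset.univ.filter fun V : Fin K → Ω => ∀ j < K, G j (vext ω0 V) with hA
    have h1 := ih (by omega)
    have h2 : (A.sigma fun V => Finset.univ.filter fun ω => G K (Function.update (vext ω0 V) K ω)).card ≤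
        (Finset.univ.filter fun V : Fin (K + 1) → Ω => ∀ j < K + 1, G j (vext ω0 V)).card := by
      refine Finset.card_le_card_of_injOn (fun p => Fin.snoc (α := fun _ => Ω) p.1 p.2) ?_ ?_
      · rintro ⟨V, ω⟩ hp
        simp only [Finset.coe_sigma, Set.mem_sigma_iff, Finset.mem_coe, hA, Finset.mem_filter, Finset.mem_univ,
          true_and] at hp ⊢
        intro j hj
        rw [vext_snoc]
        rcases Nat.lt_succ_iff_lt_or_eq.mp hj with h | h
        · refine hG j _ _ ?_ (hp.1 j h)
          intro i hi
          rw [Function.update_of_ne (by omega)]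
        · subst h; exact hp.2
      · rintro ⟨V, ω⟩ _ ⟨V', ω'⟩ _ heq
        simp only at heq
        have := Fin.snoc_injective2 heq
        rw [this.1, this.2]
    rw [Finset.card_sigma] at h2
    calc g ^ (K + 1) = g ^ K * g := pow_succ _ _
      _ ≤ A.card * g := by gcongr
      _ = ∑ V ∈ A, g := by simp
      _ ≤ ∑ V ∈ A, ((Finset.univ.filter fun ω => G K (Function.update (vext ω0 V) K ω)).card : ℝ) :=
        Finset.sum_le_sum fun V _ => hc K (by omega) _
      _ ≤ _ := by exact_mod_cast h2

abbrev Om (d : ℕ) := (Fin d → Bool) × (Fin d → Bool)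

noncomputable def vec {d : ℕ} (ω : Om d) : EuclideanSpace ℝ (Fin d) := sgv d ω.1 - sgv d ω.2

lemma vec_norm {d : ℕ} (hd : 0 < d) (ω : Om d) : ‖vec ω‖ ≤ 2 := by
  refine (norm_sub_le _ _).trans ?_
  rw [sgv_norm hd, sgv_norm hd]; norm_num

namespace Setup

variable {d n M : ℕ} (I : Setup d n) {v : ℕ → EuclideanSpace ℝ (Fin d)}
  (alg : MemAlg M (EuclideanSpace ℝ (Fin d)) (ℝ × EuclideanSpace ℝ (Fin d)))

lemma good_congr {v' : ℕ → EuclideanSpace ℝ (Fin d)} (T j : ℕ) (h : ∀ i < j, v i = v' i)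
    (x : EuclideanSpace ℝ (Fin d)) (hx : v' j = x) :
    I.Good v' alg T j ↔ (∀ s < T, |⟪x, I.qq v alg j s⟫| ≤ I.κ * ‖I.qq v alg j s‖) ∧
      (∀ y ∈ I.SS v alg T j, |⟪x, y⟫| ≤ I.r * ‖y‖) ∧
      |⟪x, I.zz v j⟫| ≤ I.κ * ‖I.zz v j‖ ∧
      1 / 4 ≤ ‖x - (I.UU v j).starProjection x‖ ^ 2 := by
  rw [Good, I.qq_congr alg j h, I.SS_congr alg T j h, I.zz_congr j h, uu,
    starProj_congr (I.UU_congr j h), hx]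

lemma UU_finrank (j : ℕ) : Module.finrank ℝ (I.UU v j) ≤ n + j := by
  classical
  have h : I.UU v j = Submodule.span ℝ
      ((Finset.univ.image I.a ∪ (Finset.range j).image v : Finset (EuclideanSpace ℝ (Fin d))) : Set _) := by
    rw [UU]; congr 1; ext; simp
  rw [h]
  refine (finrank_span_finset_le_card _).trans ((Finset.card_union_le _ _).trans ?_)
  have h1 := Finset.card_image_le (s := (Finset.univ : Finset (Fin n))) (f := I.a)
  have h2 := Finset.card_image_le (s := Finset.range j) (f := v)
  simp at h1 h2
  omega

lemma SS_finrank (hk : 0 < I.k) (T j : ℕ) : Module.finrank ℝ (I.SS v alg T j) ≤ I.k := by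
  classical
  set l := ((I.Ls v alg j T).take j).drop ((j - 1) / I.k * I.k) with hl
  have h : I.SS v alg T j = Submodule.span ℝ ((l.toFinset : Finset _) : Set (EuclideanSpace ℝ (Fin d))) := by
    rw [SS]; congr 1; ext; simp [hl]
  rw [h]
  refine (finrank_span_finset_le_card _).trans ((List.toFinset_card_le l).trans ?_)
  have h1 : l.length ≤ j - (j - 1) / I.k * I.k := by
    rw [hl, List.length_drop]
    have := List.length_take_le j (I.Ls v alg j T)
    omega
  have h2 := Nat.lt_div_mul_add (a := j - 1) hk
  omega

open Classical in
lemma good_count (hd : 0 < d) (hk : 0 < I.k) (T j N : ℕ) (hj : j < N) (t : ℝ) (B : ℕ) (ht : 0 ≤ t)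
    (hr : 0 < I.r)
    (hκ : I.κ = 2 * (t / √d))
    (hW : ((T : ℝ) + 1) * (2 * Real.exp (-(t ^ 2 / 2))) ≤ 1 / 4) (hU : (n + N) * 448 ≤ d)
    (hB : 2 * √I.k / I.r + 2 ≤ B) (hBd : (0.76 : ℝ) ^ d ≤ 1 / (8 * (B : ℝ) ^ I.k)) (V : ℕ → Om d) :
    (4 : ℝ) ^ d / (8 * (B : ℝ) ^ I.k) ≤
      (Finset.univ.filter fun ω : Om d => I.Good (fun i => vec (Function.update V j ω i)) alg T j).card := by
  have hk' : (0 : ℝ) < I.k := by exact_mod_cast hk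
  have hsk : 0 < √(I.k : ℝ) := Real.sqrt_pos.mpr hk'
  set v0 : ℕ → EuclideanSpace ℝ (Fin d) := fun i => vec (V i) with hv0
  set W : Finset (EuclideanSpace ℝ (Fin d)) := insert (I.zz v0 j) ((Finset.range T).image (I.qq v0 alg j)) with hWdef
  have hWc : (W.card : ℝ) ≤ T + 1 := by
    have h1 := Finset.card_insert_le (I.zz v0 j) ((Finset.range T).image (I.qq v0 alg j))
    have h2 := Finset.card_image_le (s := Finset.range T) (f := I.qq v0 alg j)
    rw [Finset.card_range] at h2
    exact_mod_cast h1.trans (Nat.succ_le_succ h2)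
  have := pair_count hd I.k W (I.UU v0 j) (I.SS v0 alg T j) t (I.r / √I.k) B ht (by positivity)
    (le_trans (by gcongr) hW)
    (by
      have := I.UU_finrank (v := v0) j
      have h2 : Module.finrank ℝ (I.UU v0 j) * 448 ≤ d :=
        (Nat.mul_le_mul_right 448 (this.trans (by omega : n + j ≤ n + N))).trans hU
      have h3 : ((Module.finrank ℝ (I.UU v0 j) * 448 : ℕ) : ℝ) ≤ d := Nat.cast_le.mpr h2
      rw [Nat.cast_mul] at h3
      exact h3)
    (I.SS_finrank alg hk T j)
    (by convert hB using 2; field_simp) hBd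
  refine this.trans ?_
  norm_cast
  apply Finset.card_le_card
  intro ω hω
  rw [Finset.mem_filter] at hω ⊢
  refine ⟨Finset.mem_univ _, ?_⟩
  obtain ⟨_, h1, h2, h3⟩ := hω
  rw [I.good_congr (v := v0) alg T j (fun i hi => by simp [hv0, Function.update_of_ne hi.ne])
    (vec ω) (by simp)]
  refine ⟨fun s hs => ?_, fun y hy => ?_, ?_, h3⟩
  · rw [hκ]
    exact h1 _ (Finset.mem_insert_of_mem (Finset.mem_image_of_mem _ (Finset.mem_range.mpr hs)))
  · have := h2 y hy
    rwa [mul_div_cancel₀ _ hsk.ne'] at this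
  · rw [hκ]
    exact h1 _ (Finset.mem_insert_self _ _)

open Classical in
lemma good_leaves (hd : 0 < d) (hk : 0 < I.k) (T N : ℕ) (t : ℝ) (B : ℕ) (ht : 0 ≤ t)
    (hr : 0 < I.r)
    (hκ : I.κ = 2 * (t / √d))
    (hW : ((T : ℝ) + 1) * (2 * Real.exp (-(t ^ 2 / 2))) ≤ 1 / 4) (hU : (n + N) * 448 ≤ d)
    (hB : 2 * √I.k / I.r + 2 ≤ B) (hBd : (0.76 : ℝ) ^ d ≤ 1 / (8 * (B : ℝ) ^ I.k)) (ω0 : Om d) :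
    ((4 : ℝ) ^ d / (8 * (B : ℝ) ^ I.k)) ^ N ≤
      (Finset.univ.filter fun V : Fin N → Om d =>
        ∀ j < N, I.Good (fun i => vec (vext ω0 V i)) alg T j).card := by
  refine leaf_count ω0 (fun j V => I.Good (fun i => vec (V i)) alg T j) ?_ _ (by positivity) N ?_ N le_rfl
  · intro j V V' h h1
    rw [I.good_congr (v := fun i => vec (V i)) alg T j (fun i _ => rfl) _ rfl] at h1
    rw [I.good_congr (v := fun i => vec (V i)) alg T j (fun i hi => by rw [h i hi.le]) (vec (V j))
      (by rw [h j le_rfl])]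
    exact h1
  · intro j hj V
    exact I.good_count alg hd hk T j N hj t B ht hr hκ hW hU hB hBd V

end Setup

open scoped RealInnerProductSpace

/-! ### Part 9: the union bound over bad instances -/

noncomputable def rowv {d L : ℕ} (α : Fin d → Fin L) : EuclideanSpace ℝ (Fin d) :=
  WithLp.toLp 2 fun c => ((α c : ℕ) : ℝ) / (4 * L * √d)

noncomputable def mkI {d n L : ℕ} (η r κ : ℝ) (k : ℕ) (A : Fin n → Fin d → Fin L) : Setup d n :=
  ⟨fun i => rowv (A i), η, r, κ, k⟩

lemma rowv_norm {d L : ℕ} (hd : 0 < d) (hL : 0 < L) (α : Fin d → Fin L) : ‖rowv α‖ ≤ 1 := by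
  have hd' : (0 : ℝ) < d := by exact_mod_cast hd
  have hL' : (0 : ℝ) < L := by exact_mod_cast hL
  have hsd : 0 < √(d : ℝ) := Real.sqrt_pos.mpr hd'
  have : ‖rowv α‖ ^ 2 ≤ 1 ^ 2 := by
    rw [EuclideanSpace.norm_sq_eq]
    calc _ ≤ ∑ i : Fin d, (1 / (d : ℝ)) := by
          refine Finset.sum_le_sum fun c _ => ?_
          rw [Real.norm_eq_abs, sq_abs]
          simp only [rowv]
          have h1 : ((α c : ℕ) : ℝ) ≤ L := by exact_mod_cast (α c).2.le
          rw [div_pow, mul_pow, mul_pow, Real.sq_sqrt hd'.le, div_le_div_iff₀ (by positivity) hd']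
          have h2 : ((α c : ℕ) : ℝ) ^ 2 ≤ (L : ℝ) ^ 2 := by gcongr
          nlinarith [mul_le_mul_of_nonneg_right h2 hd'.le, sq_nonneg (L : ℝ)]
      _ = 1 ^ 2 := by simp; field_simp
  exact le_of_sq_le_sq this (by norm_num)

lemma rowv_inner {d L : ℕ} (α : Fin d → Fin L) (x : EuclideanSpace ℝ (Fin d)) :
    ⟪rowv α, x⟫ = (∑ c, ((α c : ℕ) : ℝ) * x c) / (4 * L * √d) := by
  rw [Finset.sum_div]
  simp only [rowv, PiLp.inner_apply]
  refine Finset.sum_congr rfl fun c _ => ?_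
  simp
  ring

open Classical in
lemma bad_fixed {d n M L m N : ℕ} (hd : 0 < d) (hL : 0 < L) (η r κ : ℝ) (k : ℕ)
    (alg : MemAlg M (EuclideanSpace ℝ (Fin d)) (ℝ × EuclideanSpace ℝ (Fin d)))
    (v : ℕ → EuclideanSpace ℝ (Fin d)) (hη : 0 < η) (hr : 0 < r) (hLη : 1 ≤ 4 * η * L) (hkd : k ≤ d)
    (hmn : m ≤ n) (hq : 32 * η * d / r ≤ 1)
    (μ : Fin M → Bool) (c : Fin m → Option (Fin n × Bool) ⊕ Fin N) (σ : Fin k → Fin m) :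
    ((Finset.univ.filter fun A : Fin n → Fin d → Fin L =>
      (mkI η r κ k A).BadP alg v μ (Setup.cext c) (Setup.sext σ)).card : ℝ) ≤
      ((32 * η * d / r) ^ k) ^ (n - m) * ((L : ℝ) ^ d) ^ n := by
  have hd' : (0 : ℝ) < d := by exact_mod_cast hd
  have hL' : (0 : ℝ) < L := by exact_mod_cast hL
  have hsd : 0 < √(d : ℝ) := Real.sqrt_pos.mpr hd'
  set q : ℝ := (32 * η * d / r) ^ k with hqdef
  have hq0 : 0 ≤ q := by positivity
  have hq1 : q ≤ 1 := pow_le_one₀ (by positivity) hq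
  set B := Finset.univ.filter fun A : Fin n → Fin d → Fin L =>
      (mkI η r κ k A).BadP alg v μ (Setup.cext c) (Setup.sext σ) with hB
  set g : Fin m → Option (Fin n) := fun s => match c s with
    | .inl (some (i, _)) => some i
    | _ => none with hg
  set R : Finset (Fin n) := Finset.univ.filter fun i => ∃ s, g s = some i with hR
  have hRm : R.card ≤ m := by
    have : R.map Function.Embedding.some ⊆ Finset.univ.image g := by
      intro o ho
      rw [Finset.mem_map] at ho
      obtain ⟨i, hi, rfl⟩ := ho
      rw [hR, Finset.mem_filter] at hi
      obtain ⟨_, s, hs⟩ := hi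
      exact Finset.mem_image.mpr ⟨s, Finset.mem_univ _, hs⟩
    have h1 := Finset.card_le_card this
    rw [Finset.card_map] at h1
    refine h1.trans (Finset.card_image_le.trans ?_)
    simp
  have hdec : ∀ A0 A : Fin n → Fin d → Fin L, (∀ i ∈ R, A i = A0 i) → ∀ s ≤ m,
      (mkI η r κ k A).dec alg v μ (Setup.cext c) s = (mkI η r κ k A0).dec alg v μ (Setup.cext c) s := by
    intro A0 A h
    refine Setup.dec_congr (mkI η r κ k A0) alg (mkI η r κ k A) rfl rfl rfl rfl μ _ m ?_
    intro s hs i b hc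
    have : i ∈ R := by
      rw [hR, Finset.mem_filter]
      refine ⟨Finset.mem_univ _, ⟨s, hs⟩, ?_⟩
      simp only [Setup.cext, dif_pos hs] at hc
      have hc' : c ⟨s, hs⟩ = .inl (some (i, b)) := by
        match hcs : c ⟨s, hs⟩ with
        | .inl o => rw [hcs] at hc; simpa using hc
        | .inr j => rw [hcs] at hc; simp at hc
      simp only [hg, hc']
    simp only [mkI, h i this]
  have hσm : ∀ i < k, Setup.sext σ i < m := by
    intro i hi
    simp only [Setup.sext, dif_pos hi]
    exact (σ ⟨i, hi⟩).2
  have hmain := fiber_count R B (q * (L : ℝ) ^ d) (by positivity) (by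
    intro A0 hA0
    rw [hB, Finset.mem_filter] at hA0
    set x : ℕ → EuclideanSpace ℝ (Fin d) := fun i =>
      alg.query ((mkI η r κ k A0).dec alg v μ (Setup.cext c) (Setup.sext σ i)) with hx
    refine ⟨Finset.univ.filter fun α : Fin d → Fin L => ∀ i < k, |∑ c, ((α c : ℕ) : ℝ) * x i c| ≤ 8 * η * L * √d, ?_, ?_⟩
    · have := small_ball hd k L hL r (8 * η * L * √d) hr (by nlinarith) x hkd
        (fun i hi => (hA0.2 i hi).2.2) (fun i hi => (hA0.2 i hi).1.le)
      refine this.trans (le_of_eq ?_)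
      rw [hqdef]
      congr 2
      have : 4 * (8 * η * L * √d) * √d = 32 * η * L * (√d * √d) := by ring
      rw [this, Real.mul_self_sqrt hd'.le]
      field_simp
    · intro A hA hAR r'
      rw [hB, Finset.mem_filter] at hA
      rw [Finset.mem_filter]
      refine ⟨Finset.mem_univ _, fun i hi => ?_⟩
      have h1 := (hA.2 i hi).2.1 r'
      rw [hdec A0 A hAR _ (hσm i hi).le] at h1
      change |⟪rowv (A r'), x i⟫| < 2 * η at h1
      rw [rowv_inner, abs_div, abs_of_pos (show 0 < 4 * (L : ℝ) * √d by positivity), div_lt_iff₀ (by positivity)] at h1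
      linarith)
  refine hmain.trans ?_
  have hcard : (Fintype.card (Fin d → Fin L) : ℝ) = (L : ℝ) ^ d := by simp
  rw [hcard, mul_pow, mul_assoc, ← pow_add, Nat.sub_add_cancel (hRm.trans hmn)]
  refine mul_le_mul_of_nonneg_right ?_ (by positivity)
  exact pow_le_pow_of_le_one hq0 hq1 (by omega)

open Classical in
lemma bad_total {d n M L m N : ℕ} (hd : 0 < d) (hL : 0 < L) (η r κ : ℝ) (k : ℕ)
    (alg : MemAlg M (EuclideanSpace ℝ (Fin d)) (ℝ × EuclideanSpace ℝ (Fin d)))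
    (v : ℕ → EuclideanSpace ℝ (Fin d)) (hη : 0 < η) (hr : 0 < r) (hLη : 1 ≤ 4 * η * L) (hkd : k ≤ d)
    (hmn : m ≤ n) (hq : 32 * η * d / r ≤ 1) :
    ((Finset.univ.filter fun A : Fin n → Fin d → Fin L =>
      ∃ (μ : Fin M → Bool) (c : Fin m → Option (Fin n × Bool) ⊕ Fin N) (σ : Fin k → Fin m),
      (mkI η r κ k A).BadP alg v μ (Setup.cext c) (Setup.sext σ)).card : ℝ) ≤
      (2 ^ M * (2 * n + 1 + N) ^ m * m ^ k) * (((32 * η * d / r) ^ k) ^ (n - m) * ((L : ℝ) ^ d) ^ n) := by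
  set Z := (Fin M → Bool) × (Fin m → Option (Fin n × Bool) ⊕ Fin N) × (Fin k → Fin m)
  set bb : Z → Finset (Fin n → Fin d → Fin L) := fun z => Finset.univ.filter fun A =>
      (mkI η r κ k A).BadP alg v z.1 (Setup.cext z.2.1) (Setup.sext z.2.2) with hbb
  have hsub : (Finset.univ.filter fun A : Fin n → Fin d → Fin L =>
      ∃ (μ : Fin M → Bool) (c : Fin m → Option (Fin n × Bool) ⊕ Fin N) (σ : Fin k → Fin m),
      (mkI η r κ k A).BadP alg v μ (Setup.cext c) (Setup.sext σ)) ⊆ Finset.univ.biUnion bb := by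
    intro A hA
    rw [Finset.mem_filter] at hA
    obtain ⟨_, μ, c, σ, h⟩ := hA
    rw [Finset.mem_biUnion]
    exact ⟨(μ, c, σ), Finset.mem_univ _, by rw [hbb, Finset.mem_filter]; exact ⟨Finset.mem_univ _, h⟩⟩
  have h1 := (Finset.card_le_card hsub).trans Finset.card_biUnion_le
  have hZ : (Fintype.card Z : ℝ) = 2 ^ M * (2 * n + 1 + N) ^ m * m ^ k := by
    simp [Z]; ring
  calc _ ≤ ((∑ z : Z, (bb z).card : ℕ) : ℝ) := by exact_mod_cast h1
    _ = ∑ z : Z, ((bb z).card : ℝ) := by push_cast; rfl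
    _ ≤ ∑ z : Z, (((32 * η * d / r) ^ k) ^ (n - m) * ((L : ℝ) ^ d) ^ n) :=
      Finset.sum_le_sum fun z _ => bad_fixed hd hL η r κ k alg v hη hr hLη hkd hmn hq z.1 z.2.1 z.2.2
    _ = _ := by rw [Finset.sum_const, Finset.card_univ, nsmul_eq_mul, hZ]

/-- Combinatorial core of the lower bound. -/
lemma core {d n M m P k T B : ℕ} (η r t ε : ℝ) (hd : 0 < d) (hk : 0 < k) (hkd : k ≤ d) (hT : 1 ≤ T)
    (alg : MemAlg M (EuclideanSpace ℝ (Fin d)) (ℝ × EuclideanSpace ℝ (Fin d)))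
    (hmin : MinimizesConvex d alg T ε)
    (hη : 0 < η) (hη' : η ≤ 1 / 4) (hr : 0 < r) (hr1 : r ≤ 1) (ht : 0 ≤ t)
    (hmn : m ≤ n) (hq : 32 * η * d / r ≤ 1)
    (hW : ((T : ℝ) + 1) * (2 * Real.exp (-(t ^ 2 / 2))) ≤ 1 / 4) (hU : (n + (k * P + 1)) * 448 ≤ d)
    (hB : 2 * √k / r + 2 ≤ B) (hBd : (0.76 : ℝ) ^ d ≤ 1 / (8 * (B : ℝ) ^ k))
    (hκ1 : 2 * (2 * (t / √d)) ≤ 1)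
    (hκN : 2 * (2 * (t / √d)) * √(k * P + 1 : ℕ) ≤ 1 / 8)
    (hε : ε < η * (1 / (32 * √(k * P + 1 : ℕ)) - 5 * r -
      (10 * r * (k * P) + (2 * (2 * (t / √d)) + 5 * r) * P))) :
    k * P + 1 ≤ T ∧ (T ≤ P * m →
      1 ≤ (8 * (B : ℝ) ^ k) ^ (k * P + 1) *
        ((2 ^ M * (2 * n + 1 + (k * P + 1)) ^ m * m ^ k) * ((32 * η * d / r) ^ k) ^ (n - m))) := by
  classical
  set N := k * P + 1 with hN
  set κ := 2 * (t / √(d : ℝ)) with hκ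
  have hκ0 : 0 ≤ κ := by positivity
  obtain ⟨L, hL⟩ := exists_nat_ge (max 1 (1 / (4 * η)))
  have hL1 : (1 : ℝ) ≤ L := (le_max_left _ _).trans hL
  have hL0 : 0 < L := by exact_mod_cast (lt_of_lt_of_le one_pos hL1)
  have hL' : (0 : ℝ) < L := by exact_mod_cast hL0
  have hLη : 1 ≤ 4 * η * L := by
    have := (le_max_right _ _).trans hL
    rw [div_le_iff₀ (by positivity)] at this
    linarith
  have hB0 : (0 : ℝ) < B := by
    have : 0 ≤ 2 * √(k : ℝ) / r := by positivity
    linarith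
  set ω0 : Om d := (fun _ => false, fun _ => false) with hω0
  set g : ℝ := (4 : ℝ) ^ d / (8 * (B : ℝ) ^ k) with hg
  have hg0 : 0 < g := by positivity
  have hgood : ∀ A : Fin n → Fin d → Fin L, g ^ N ≤
      (Finset.univ.filter fun V : Fin N → Om d =>
        ∀ j < N, (mkI η r κ k A).Good (fun i => vec (vext ω0 V i)) alg T j).card := fun A =>
    (mkI η r κ k A).good_leaves alg hd hk T N t B ht hr rfl hW hU hB hBd ω0
  have hlen : ∀ (A : Fin n → Fin d → Fin L) (V : Fin N → Om d),
      (∀ j < N, (mkI η r κ k A).Good (fun i => vec (vext ω0 V i)) alg T j) →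
      N ≤ ((mkI η r κ k A).Ls (fun i => vec (vext ω0 V i)) alg N T).length := fun A V h =>
    (mkI η r κ k A).det_main alg hk hr.le hr1 hκ0 hκ1 hη hη' (fun i => rowv_norm hd hL0 _)
      (fun j => vec_norm hd _) T P hT ε hκN h hε hmin
  constructor
  · have h1 := hgood (fun _ _ => ⟨0, hL0⟩)
    have h2 : (0 : ℝ) < (Finset.univ.filter fun V : Fin N → Om d =>
        ∀ j < N, (mkI η r κ k (fun (_ : Fin n) (_ : Fin d) => (⟨0, hL0⟩ : Fin L))).Good (fun i => vec (vext ω0 V i)) alg T j).card :=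
      lt_of_lt_of_le (by positivity) h1
    have h3 := Finset.card_pos.mp (by exact_mod_cast h2)
    obtain ⟨V, hV⟩ := h3
    rw [Finset.mem_filter] at hV
    exact (hlen _ V hV.2).trans ((mkI η r κ k _).expl_len_le _ _)
  · intro hTP
    have h1 := double_count (fun (A : Fin n → Fin d → Fin L) (V : Fin N → Om d) =>
      ∀ j < N, (mkI η r κ k A).Good (fun i => vec (vext ω0 V i)) alg T j) (g ^ N) _ hgood (fun V => by
        refine le_trans ?_ (bad_total (n := n) (N := N) (m := m) hd hL0 η r κ k alg (fun i => vec (vext ω0 V i)) hη hr hLη hkd hmn hq)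
        norm_cast
        apply Finset.card_le_card
        intro A hA
        rw [Finset.mem_filter] at hA ⊢
        exact ⟨Finset.mem_univ _, (mkI η r κ k A).bad_of_len alg T P m N hk (hlen A V hA.2) hTP⟩)
    have hcA : (Fintype.card (Fin n → Fin d → Fin L) : ℝ) = ((L : ℝ) ^ d) ^ n := by simp
    have hcV : (Fintype.card (Fin N → Om d) : ℝ) = ((4 : ℝ) ^ d) ^ N := by
      simp only [Om, Fintype.card_fun, Fintype.card_prod, Fintype.card_bool, Fintype.card_fin]
      push_cast
      rw [← mul_pow]; norm_num
    rw [hcA, hcV, hg, div_pow] at h1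
    have hx : 0 < ((L : ℝ) ^ d) ^ n := by positivity
    have hy : 0 < ((4 : ℝ) ^ d) ^ N := by positivity
    have hz : 0 < (8 * (B : ℝ) ^ k) ^ N := by positivity
    rw [← mul_div_assoc, div_le_iff₀ hz] at h1
    have hNc : ((N : ℕ) : ℝ) = (k * P + 1 : ℝ) := by rw [hN]; push_cast; ring
    rw [hNc] at h1
    have hxy : 0 < ((L : ℝ) ^ d) ^ n * ((4 : ℝ) ^ d) ^ N := by positivity
    refine le_of_mul_le_mul_left ?_ hxy
    rw [mul_one]
    refine h1.trans (le_of_eq ?_)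
    ring

open scoped RealInnerProductSpace

/-! ### Part 10: choice of parameters -/

lemma core_log {n M m N k B : ℕ} {D ℓ Q : ℝ} (hD : 10 ^ 17 ≤ D) (hℓ : ℓ = Real.log D)
    (hℓ1 : 1 ≤ ℓ) (hk : 1 ≤ k) (hN : (N : ℝ) ≤ 2 * D / 10 ^ 8) (hB : (B : ℝ) = D ^ 3)
    (hn1 : D / 1000 - 1 ≤ n) (hn2 : (n : ℝ) ≤ D / 1000) (hm : 1 ≤ m) (hm2 : (m : ℝ) ≤ n / 10)
    (hQ0 : 0 < Q) (hQ : Q ≤ 1 / √D) (hM : (M : ℝ) ≤ k * ℓ * D / 10 ^ 4)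
    (h : 1 ≤ (8 * (B : ℝ) ^ k) ^ N * ((2 ^ M * (2 * n + 1 + N : ℝ) ^ m * m ^ k) * (Q ^ k) ^ (n - m))) :
    False := by
  have hD0 : (0 : ℝ) < D := by linarith [show (0 : ℝ) < 10 ^ 17 by norm_num]
  have hk1 : (1 : ℝ) ≤ k := by exact_mod_cast hk
  have hm1 : (1 : ℝ) ≤ m := by exact_mod_cast hm
  have hB0 : (0 : ℝ) < B := by rw [hB]; positivity
  have hX0 : (0 : ℝ) < 2 * n + 1 + N := by positivity
  have hmn : m ≤ n := by
    have : (m : ℝ) ≤ n := by have : (0 : ℝ) ≤ n := by positivity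
                             linarith
    exact_mod_cast this
  have hlog := Real.log_nonneg h
  rw [Real.log_mul (by positivity) (by positivity), Real.log_mul (by positivity) (by positivity),
    Real.log_mul (by positivity) (by positivity), Real.log_mul (by positivity) (by positivity),
    Real.log_pow, Real.log_mul (by positivity) (by positivity), Real.log_pow, Real.log_pow, Real.log_pow,
    Real.log_pow, Real.log_pow, Real.log_pow, hB, Real.log_pow, ← hℓ, Nat.cast_sub hmn] at hlog
  have h8 : Real.log 8 ≤ 3 * ℓ := by
    have : Real.log 8 = 3 * Real.log 2 := by
      rw [show (8 : ℝ) = 2 ^ 3 by norm_num, Real.log_pow]; norm_num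
    have := Real.log_two_lt_d9
    linarith
  have h2 : Real.log 2 ≤ 1 := by have := Real.log_two_lt_d9; linarith
  have hx : Real.log (2 * n + 1 + N) ≤ ℓ := by
    rw [hℓ]; apply Real.log_le_log hX0; linarith
  have hlm : Real.log m ≤ ℓ := by
    rw [hℓ]; apply Real.log_le_log (by linarith); linarith
  have hlQ : Real.log Q ≤ -(ℓ / 2) := by
    have h1 := Real.log_le_log hQ0 hQ
    rw [one_div, Real.log_inv, Real.log_sqrt hD0.le, ← hℓ] at h1
    linarith
  set Y : ℝ := k * ℓ with hY
  have hY0 : 1 ≤ Y := by rw [hY]; nlinarith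
  have hYl : ℓ ≤ Y := by rw [hY]; nlinarith
  have e1 : (N : ℝ) * (Real.log 8 + k * ((3 : ℕ) * ℓ)) ≤ (2 * D / 10 ^ 8) * (6 * Y) := by
    apply mul_le_mul hN _ (by have := Real.log_nonneg (show (1 : ℝ) ≤ 8 by norm_num); positivity) (by positivity)
    push_cast
    linarith
  have e2 : (M : ℝ) * Real.log 2 ≤ Y * D / 10 ^ 4 := by
    have : (M : ℝ) * Real.log 2 ≤ M * 1 := by gcongr
    linarith
  have e3 : (m : ℝ) * Real.log (2 * n + 1 + N) ≤ D / 10 ^ 4 * Y := by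
    have h1 : (m : ℝ) * Real.log (2 * n + 1 + N) ≤ m * Y := by gcongr; linarith
    have h2 : (m : ℝ) * Y ≤ D / 10 ^ 4 * Y := by gcongr; linarith
    linarith
  have e4 : (k : ℝ) * Real.log m ≤ Y := by rw [hY]; gcongr
  have e5 : ((n : ℝ) - m) * (k * Real.log Q) ≤ - (8 * D / 10 ^ 4 * (Y / 2)) := by
    have h1 : k * Real.log Q ≤ -(Y / 2) := by
      have : k * Real.log Q ≤ k * (-(ℓ / 2)) := by gcongr
      rw [hY]; linarith
    have h3 : 8 * D / 10 ^ 4 ≤ (n : ℝ) - m := by linarith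
    have h4 : 8 * D / 10 ^ 4 * (Y / 2) ≤ ((n : ℝ) - m) * (Y / 2) := by gcongr
    have h5 : ((n : ℝ) - m) * (k * Real.log Q) ≤ ((n : ℝ) - m) * (-(Y / 2)) := by
      apply mul_le_mul_of_nonneg_left h1
      have : 0 ≤ 8 * D / 10 ^ 4 := by positivity
      linarith
    linarith
  have e6 : Y * 10 ^ 17 ≤ Y * D := by gcongr
  have hZ : 0 < Y * D := by positivity
  have f1 : (2 * D / 10 ^ 8) * (6 * Y) = 12 / 10 ^ 8 * (Y * D) := by ring
  have f3 : D / 10 ^ 4 * Y = 1 / 10 ^ 4 * (Y * D) := by ring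
  have f5 : 8 * D / 10 ^ 4 * (Y / 2) = 4 / 10 ^ 4 * (Y * D) := by ring
  rw [f1] at e1
  rw [f3] at e3
  rw [f5] at e5
  generalize Y * D = Z at *
  clear hQ h hQ0 hn1 hn2 hm2 hx hlm hlQ hM hB
  norm_num at e1 e2 e3 e5 e6 hlog
  linarith

set_option maxHeartbeats 4000000 in
lemma core2 {d M P k T : ℕ} (hd : (10 : ℝ) ^ 17 ≤ d) (hk : 1 ≤ k) (hP : 1 ≤ P) (hT : (T : ℝ) ≤ (d : ℝ) ^ 2)
    (alg : MemAlg M (EuclideanSpace ℝ (Fin d)) (ℝ × EuclideanSpace ℝ (Fin d)))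
    (hmin : MinimizesConvex d alg T (1 / (d : ℝ) ^ 4))
    (hPk : (P : ℝ) ^ 3 * k * Real.log d ≤ d / 10 ^ 8) :
    k * P + 1 ≤ T ∧ ((M : ℝ) ≤ k * Real.log d * d / 10 ^ 4 → P * (d / 1000 / 10) ≤ T) := by
  have key : ∀ T : ℕ, 1 ≤ T → (T : ℝ) ≤ (d : ℝ) ^ 2 → MinimizesConvex d alg T (1 / (d : ℝ) ^ 4) →
      k * P + 1 ≤ T ∧ ((M : ℝ) ≤ k * Real.log d * d / 10 ^ 4 → P * (d / 1000 / 10) ≤ T) := by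
    clear hmin hT T
    intro T hT1 hT hmin
    have hd2 : 20000 ≤ d := by
      have : (20000 : ℝ) ≤ d := le_trans (by norm_num) hd
      exact_mod_cast this
    obtain ⟨D, hDdef⟩ : ∃ D : ℝ, D = (d : ℝ) := ⟨_, rfl⟩
    rw [← hDdef] at hd hPk hT hmin ⊢
    have hD : (10 : ℝ) ^ 17 ≤ D := hd
    clear hd
    have hD0 : (0 : ℝ) < D := by linarith [show (0 : ℝ) < 10 ^ 17 by norm_num]
    obtain ⟨ℓ, hℓ⟩ : ∃ x : ℝ, x = Real.log D := ⟨_, rfl⟩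
    rw [← hℓ] at hPk ⊢
    have hℓ1 : 1 ≤ ℓ := by
      rw [hℓ, Real.le_log_iff_exp_le hD0]
      have := Real.exp_one_lt_d9
      linarith
    have hk1 : (1 : ℝ) ≤ k := by exact_mod_cast hk
    have hP1 : (1 : ℝ) ≤ P := by exact_mod_cast hP
    obtain ⟨s, hs⟩ : ∃ x : ℝ, x = √D := ⟨_, rfl⟩
    have hs2 : s ^ 2 = D := by rw [hs]; exact Real.sq_sqrt hD0.le
    have hs0 : 0 < s := by rw [hs]; exact Real.sqrt_pos.mpr hD0
    have hs1 : 10 ^ 8 ≤ s := by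
      apply le_of_sq_le_sq _ hs0.le
      rw [hs2]; linarith [show ((10 : ℝ) ^ 8) ^ 2 ≤ 10 ^ 17 by norm_num]
    obtain ⟨l, hl⟩ : ∃ x : ℝ, x = √ℓ := ⟨_, rfl⟩
    have hl2 : l ^ 2 = ℓ := by rw [hl]; exact Real.sq_sqrt (by linarith)
    have hl1 : 1 ≤ l := by rw [hl]; exact Real.one_le_sqrt.mpr hℓ1
    obtain ⟨N, hN⟩ : ∃ x : ℕ, x = k * P + 1 := ⟨_, rfl⟩
    have hNc : (N : ℝ) = k * P + 1 := by rw [hN]; push_cast; ring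
    have hkP1 : (1 : ℝ) ≤ k * P := one_le_mul_of_one_le_of_one_le hk1 hP1
    have hN1 : (1 : ℝ) ≤ N := by linarith
    obtain ⟨sN, hsN⟩ : ∃ x : ℝ, x = √(N : ℝ) := ⟨_, rfl⟩
    have hsN2 : sN ^ 2 = N := by rw [hsN]; exact Real.sq_sqrt (by linarith)
    have hsN1 : 1 ≤ sN := by rw [hsN]; exact Real.one_le_sqrt.mpr hN1
    -- main smallness
    have hPPl : P ^ 2 * ℓ * N ≤ 2 * D / 10 ^ 8 := by
      have h1 : (N : ℝ) ≤ 2 * (k * P) := by linarith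
      calc (P : ℝ) ^ 2 * ℓ * N ≤ P ^ 2 * ℓ * (2 * (k * P)) := by gcongr
        _ = 2 * (P ^ 3 * k * ℓ) := by ring
        _ ≤ _ := by linarith
    have hPls : P * l * sN ≤ 1.5 / 10 ^ 4 * s := by
      apply le_of_sq_le_sq _ (by positivity)
      rw [mul_pow, mul_pow, mul_pow, hl2, hsN2, hs2]
      linarith
    have hlP : 1 ≤ P * l := one_le_mul_of_one_le_of_one_le hP1 hl1
    have hNP : (N : ℝ) ≤ 2 * D / 10 ^ 8 := by
      have h1 : 1 ≤ P ^ 2 * ℓ := one_le_mul_of_one_le_of_one_le (one_le_pow₀ hP1) hℓ1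
      exact (le_mul_of_one_le_left (by positivity) h1).trans hPPl
    have hls : l * sN ≤ 1.5 / 10 ^ 4 * s := by
      have : l * sN ≤ P * (l * sN) := le_mul_of_one_le_left (by positivity) hP1
      linarith
    have hsNs : sN ≤ 1.5 / 10 ^ 4 * s := by
      have : sN ≤ l * sN := le_mul_of_one_le_left (by positivity) hl1
      linarith
    have hkℓ : k * ℓ ≤ D / 10 ^ 8 := by
      have : k * ℓ ≤ P ^ 3 * (k * ℓ) := le_mul_of_one_le_left (by positivity) (one_le_pow₀ hP1)
      linarith
    have hkD : (k : ℝ) ≤ D / 10 ^ 8 := (le_mul_of_one_le_right (by positivity) hℓ1).trans hkℓ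
    -- naturals
    obtain ⟨n, hn⟩ : ∃ x : ℕ, x = d / 1000 := ⟨_, rfl⟩
    obtain ⟨m, hm⟩ : ∃ x : ℕ, x = n / 10 := ⟨_, rfl⟩
    have hn1 : D / 1000 - 1 ≤ n := by
      have h1 : d < (n + 1) * 1000 := by omega
      have h2 : D < ((n : ℝ) + 1) * 1000 := by rw [hDdef]; exact_mod_cast h1
      linarith
    have hn2 : (n : ℝ) ≤ D / 1000 := by
      have h1 : n * 1000 ≤ d := by omega
      have h2 : (n : ℝ) * 1000 ≤ D := by rw [hDdef]; exact_mod_cast h1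
      linarith
    have hm1 : 1 ≤ m := by omega
    have hm2 : (m : ℝ) ≤ n / 10 := by
      have h1 : m * 10 ≤ n := by omega
      have h2 : (m : ℝ) * 10 ≤ n := by exact_mod_cast h1
      linarith
    -- parameters
    obtain ⟨η, hη⟩ : ∃ x : ℝ, x = 1 / (D ^ 3 * s) := ⟨_, rfl⟩
    obtain ⟨r, hr⟩ : ∃ x : ℝ, x = 1 / (100 * D * s) := ⟨_, rfl⟩
    have hη0 : 0 < η := by rw [hη]; positivity
    have hr0 : 0 < r := by rw [hr]; positivity
    have hD23 : 10 ^ 17 * D ^ 2 ≤ D ^ 3 := by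
      rw [show D ^ 3 = D * D ^ 2 by ring]; gcongr
    have hD12 : 1 ≤ D ^ 2 := one_le_pow₀ (by linarith)
    have hD3 : 1 ≤ D ^ 3 := one_le_pow₀ (by linarith)
    have hqv : 32 * η * D / r = 3200 / D := by
      rw [hη, hr]; field_simp; norm_num
    obtain ⟨B, hB⟩ : ∃ x : ℕ, x = d ^ 3 := ⟨_, rfl⟩
    have hBc : (B : ℝ) = D ^ 3 := by rw [hB, hDdef]; push_cast; rfl
    have c0 : 0 < d := by omega
    have c2 : k ≤ d := by
        have : (k : ℝ) ≤ D := by linarith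
        rw [hDdef] at this; exact_mod_cast this
    have c7 : η ≤ 1 / 4 := by
                            rw [hη]; apply one_div_le_one_div_of_le (by norm_num)
                            calc (4 : ℝ) ≤ 1 * s := by linarith
                              _ ≤ D ^ 3 * s := by gcongr
    have c9 : r ≤ 1 := by
                          rw [hr, div_le_one (by positivity)]
                          calc (1 : ℝ) ≤ 1 * s := by linarith
                            _ ≤ 100 * D * s := by gcongr; linarith
    have c10 : 0 ≤ 3 * l := by positivity
    have c11 : m ≤ n := by omega
    have c12 : 32 * η * D / r ≤ 1 := by rw [hqv, div_le_one hD0]; linarith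
    have c13 : ((T : ℝ) + 1) * (2 * Real.exp (-((3 * l) ^ 2 / 2))) ≤ 1 / 4 := by
        have h1 : Real.exp (-((3 * l) ^ 2 / 2)) ≤ 1 / D ^ 3 := by
          have : (1 : ℝ) / D ^ 3 = Real.exp (-(3 * ℓ)) := by
            have h0 : Real.exp (3 * ℓ) = D ^ 3 := by
              rw [show 3 * ℓ = ((3 : ℕ) : ℝ) * ℓ by norm_num, Real.exp_nat_mul, hℓ, Real.exp_log hD0]
            rw [Real.exp_neg, h0, one_div]
          rw [this, mul_pow, hl2]
          apply Real.exp_le_exp.mpr; linarith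
        calc ((T : ℝ) + 1) * (2 * Real.exp (-((3 * l) ^ 2 / 2))) ≤ (D ^ 2 + 1) * (2 * (1 / D ^ 3)) := by gcongr
          _ = (2 * D ^ 2 + 2) / D ^ 3 := by field_simp
          _ ≤ 1 / 4 := by
            rw [div_le_div_iff₀ (by positivity) (by norm_num)]
            linarith
    have c14 : (n + N) * 448 ≤ d := by
        have : (((n + N) * 448 : ℕ) : ℝ) ≤ D := by
          push_cast; linarith
        rw [hDdef] at this; exact_mod_cast this
    have c15 : 2 * √(k : ℝ) / r + 2 ≤ B := by
        rw [hBc, hr]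
        have h1 : √(k : ℝ) ≤ s := by rw [hs]; exact Real.sqrt_le_sqrt (by linarith)
        have h2 : 2 * √(k : ℝ) / (1 / (100 * D * s)) = 200 * D * s * √(k : ℝ) := by field_simp; norm_num
        rw [h2]
        have h3 : 200 * D * s * √(k : ℝ) ≤ 200 * D * s * s := by gcongr
        have h4 : 200 * D * s * s = 200 * D ^ 2 := by rw [← hs2]; ring
        linarith
    have c16 : (0.76 : ℝ) ^ d ≤ 1 / (8 * (B : ℝ) ^ k) := by
        rw [hBc, le_div_iff₀ (by positivity)]
        have h1 : (0.76 : ℝ) ^ d ≤ Real.exp (-(0.24 * D)) := by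
          have : (0.76 : ℝ) ≤ Real.exp (-0.24) := by
            have := Real.add_one_le_exp (-0.24 : ℝ)
            linarith
          calc (0.76 : ℝ) ^ d ≤ (Real.exp (-0.24)) ^ d := by gcongr
            _ = _ := by rw [← Real.exp_nat_mul]; congr 1; rw [hDdef]; ring
        have h2 : 8 * (D ^ 3) ^ k ≤ Real.exp (3 + 3 * (k * ℓ)) := by
          have h3 : (D ^ 3) ^ k = Real.exp (3 * (k * ℓ)) := by
            rw [← pow_mul, ← Real.exp_log (show 0 < D ^ (3 * k) by positivity), Real.log_pow, ← hℓ]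
            congr 1; push_cast; ring
          have h4 : (8 : ℝ) ≤ Real.exp 3 := by
            have : Real.exp 3 = Real.exp 1 ^ 3 := by rw [← Real.exp_nat_mul]; norm_num
            rw [this]
            calc (8 : ℝ) = 2 ^ 3 := by norm_num
              _ ≤ _ := by gcongr; linarith [Real.add_one_le_exp (1 : ℝ)]
          rw [h3, Real.exp_add]
          gcongr
        calc (0.76 : ℝ) ^ d * (8 * (D ^ 3) ^ k) ≤ Real.exp (-(0.24 * D)) * Real.exp (3 + 3 * (k * ℓ)) := by gcongr
          _ = Real.exp (-(0.24 * D) + (3 + 3 * (k * ℓ))) := (Real.exp_add _ _).symm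
          _ ≤ 1 := by
            rw [← Real.exp_zero]; apply Real.exp_le_exp.mpr
            linarith
    have c17 : 2 * (2 * (3 * l / s)) ≤ 1 := by
        have h0 : l ≤ l * sN := le_mul_of_one_le_right (by positivity) hsN1
        have : 2 * (2 * (3 * l / s)) = 12 * l / s := by ring
        rw [this, div_le_one hs0]; linarith
    have c18 : 2 * (2 * (3 * l / s)) * sN ≤ 1 / 8 := by
        have : 2 * (2 * (3 * l / s)) * sN = 12 * (l * sN) / s := by ring
        rw [this, div_le_iff₀ hs0]; linarith
    have c19 : 1 / D ^ 4 < η * (1 / (32 * sN) - 5 * r - (10 * r * (k * P) + (2 * (2 * (3 * l / s)) + 5 * r) * P)) := by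
        have h1 : 1 / D ^ 4 = η * (1 / s) := by
          rw [hη, div_mul_div_comm, mul_assoc, ← pow_two s, hs2, ← pow_succ, mul_one]
        rw [h1]
        refine mul_lt_mul_of_pos_left ?_ hη0
        have hsN0 : 0 < sN := by linarith
        have a1 : 1 / s ≤ 1.5 / 10 ^ 4 * (1 / sN) := by
          rw [div_le_iff₀ hs0, mul_assoc, one_div, mul_comm (sN⁻¹), ← mul_assoc, ← div_eq_mul_inv,
            le_div_iff₀ hsN0]
          linarith
        have a2 : 2 * (2 * (3 * l / s)) * P ≤ 12 * (1.5 / 10 ^ 4 * (1 / sN)) := by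
          have : P * l / s ≤ 1.5 / 10 ^ 4 * (1 / sN) := by
            rw [div_le_iff₀ hs0, mul_assoc, one_div, mul_comm (sN⁻¹), ← mul_assoc, ← div_eq_mul_inv,
              le_div_iff₀ hsN0]
            linarith
          have h3 : 2 * (2 * (3 * l / s)) * P = 12 * (P * l / s) := by ring
          linarith
        have a3 : 5 * r + 10 * r * (k * P) + 5 * r * P ≤ 1 / s := by
          have h4 : (P : ℝ) ≤ k * P := le_mul_of_one_le_left (by positivity) hk1
          have h5 : 5 * r + 10 * r * (k * P) + 5 * r * P ≤ 20 * N * r := by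
            have h8 : r * P ≤ r * (k * P) := by gcongr
            have h9 : 20 * N * r = 20 * r + 20 * (r * (k * P)) := by rw [hNc]; ring
            have h10 : 0 ≤ r * (k * P) := by positivity
            rw [h9]; linarith
          refine h5.trans ?_
          have h6 : 20 * N * r = (20 * N / (100 * D)) * (1 / s) := by rw [hr]; field_simp
          rw [h6]
          have h7 : 20 * N / (100 * D) ≤ 1 := by rw [div_le_one (by positivity)]; linarith
          exact mul_le_of_le_one_left (by positivity) h7
        have a4 : 1 / (32 * sN) = 1 / 32 * (1 / sN) := by field_simp
        have a5 : 0 < 1 / sN := by positivity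
        rw [a4]
        linarith
    rw [hN] at c14
    rw [hsN, hN] at c18 c19
    rw [hs] at c17 c18 c19
    rw [hDdef] at c12 c17 c18 c19 hmin
    have hC := core (d := d) (n := n) (M := M) (m := m) (P := P) (k := k) (T := T) (B := B) η r (3 * l)
      (1 / (d : ℝ) ^ 4) c0 hk c2 hT1 alg hmin hη0 c7 hr0 c9 c10 c11 c12 c13 c14 c15 c16 c17 c18 c19
    refine ⟨hC.1, fun hM => ?_⟩
    by_contra hcon
    push Not at hcon
    have hF := hC.2 (by rw [hm, hn]; exact hcon.le)
    rw [← hN, ← hDdef, hqv, show (k : ℝ) * P + 1 = N from hNc.symm] at hF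
    refine core_log (D := D) (ℓ := ℓ) hD hℓ hℓ1 hk hNP hBc hn1 hn2 hm1 hm2 (by positivity) ?_ hM hF
    rw [← hs, div_le_div_iff₀ hD0 hs0, ← hs2]
    have : 3200 * s ≤ s * s := by gcongr; linarith
    linarith
  rcases Nat.eq_zero_or_pos T with h0 | h0
  · subst h0
    have h1 := (key 1 le_rfl (by
      have : (1 : ℝ) ≤ d := le_trans (by norm_num) hd
      rw [Nat.cast_one]; exact one_le_pow₀ this) hmin).1
    have : 1 ≤ k * P := Nat.mul_pos hk hP
    omega
  · exact key T h0 hT hmin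

open scoped RealInnerProductSpace

/-! ### Part 11: the final arithmetic -/

lemma final_arith {d M T : ℕ} (hd : (10 : ℝ) ^ 17 ≤ d)
    (alg : MemAlg M (EuclideanSpace ℝ (Fin d)) (ℝ × EuclideanSpace ℝ (Fin d)))
    (hmin : MinimizesConvex d alg T (1 / (d : ℝ) ^ 4)) {u v : ℝ} (hu1 : 1 ≤ u)
    (hu3 : u ^ 3 ≤ d) (hv1 : 1 ≤ v) (hv : v ^ 3 = Real.log d)
    (hM : (M : ℝ) * u ^ 3 ≤ (d : ℝ) ^ 2) :
    1 / 10 ^ 15 * ((d : ℝ) * u) / v ^ 5 ≤ T := by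
  obtain ⟨D, hDdef⟩ : ∃ D : ℝ, D = (d : ℝ) := ⟨_, rfl⟩
  have hD : (10 : ℝ) ^ 17 ≤ D := by rw [hDdef]; exact hd
  have hD0 : (0 : ℝ) < D := by linarith [show (0 : ℝ) < 10 ^ 17 by norm_num]
  have hu0 : 0 < u := by linarith
  have hv0 : 0 < v := by linarith
  have hv5 : 1 ≤ v ^ 5 := one_le_pow₀ hv1
  have hv3 : 1 ≤ v ^ 3 := one_le_pow₀ hv1
  obtain ⟨ℓ, hℓv⟩ : ∃ x : ℝ, x = v ^ 3 := ⟨_, rfl⟩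
  have hℓ : ℓ = Real.log d := by rw [hℓv, hv]
  have hℓ1 : 1 ≤ ℓ := by rw [hℓv]; exact hv3
  have hℓ0 : 0 < ℓ := by linarith
  have huD : u ≤ D := by
    have : u ≤ u ^ 3 := le_self_pow₀ hu1 (by norm_num)
    rw [hDdef]; linarith
  rcases lt_or_ge ((d : ℝ) ^ 2) (T : ℝ) with hT | hT
  · have h1 : 1 / 10 ^ 15 * ((d : ℝ) * u) / v ^ 5 ≤ 1 / 10 ^ 15 * ((d : ℝ) * u) :=
      div_le_self (by positivity) hv5
    have h2 : (d : ℝ) * u ≤ (d : ℝ) ^ 2 := by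
      rw [pow_two, ← hDdef]; gcongr
    have h3 : 0 ≤ (d : ℝ) ^ 2 := by positivity
    linarith
  rw [← hDdef] at hu3 hM ⊢
  obtain ⟨k, hk⟩ : ∃ k : ℕ, k = ⌊10 ^ 4 * (M : ℝ) / (D * ℓ)⌋₊ + 1 := ⟨_, rfl⟩
  have hk1 : 1 ≤ k := by omega
  have hkr : (1 : ℝ) ≤ k := by exact_mod_cast hk1
  have hMk : (M : ℝ) ≤ k * ℓ * D / 10 ^ 4 := by
    have h1 : 10 ^ 4 * (M : ℝ) / (D * ℓ) < k := by
      rw [hk]; push_cast; exact Nat.lt_floor_add_one _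
    rw [div_lt_iff₀ (by positivity)] at h1
    rw [le_div_iff₀ (by norm_num)]
    linarith
  have hkM : (k : ℝ) * ℓ * D ≤ 10 ^ 4 * M + D * ℓ := by
    have h1 : (k : ℝ) ≤ 10 ^ 4 * (M : ℝ) / (D * ℓ) + 1 := by
      rw [hk]; push_cast
      have := Nat.floor_le (show 0 ≤ 10 ^ 4 * (M : ℝ) / (D * ℓ) by positivity)
      linarith
    calc (k : ℝ) * ℓ * D ≤ (10 ^ 4 * (M : ℝ) / (D * ℓ) + 1) * ℓ * D := by gcongr
      _ = _ := by field_simp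
  have hku : (k : ℝ) * ℓ * u ^ 3 ≤ 10001 * (D * ℓ) := by
    have h1 : (k : ℝ) * ℓ * u ^ 3 * D ≤ 10001 * (D * ℓ) * D := by
      calc (k : ℝ) * ℓ * u ^ 3 * D = (k * ℓ * D) * u ^ 3 := by ring
        _ ≤ (10 ^ 4 * M + D * ℓ) * u ^ 3 := by gcongr
        _ = 10 ^ 4 * (M * u ^ 3) + D * ℓ * u ^ 3 := by ring
        _ ≤ 10 ^ 4 * (D ^ 2 * ℓ) + D * ℓ * D := by
          have h3 : (M : ℝ) * u ^ 3 ≤ D ^ 2 * ℓ :=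
            hM.trans (le_mul_of_one_le_right (by positivity) hℓ1)
          have h4 : D * ℓ * u ^ 3 ≤ D * ℓ * D := by gcongr
          linarith
        _ = _ := by ring
    exact le_of_mul_le_mul_right h1 hD0
  obtain ⟨y, hy⟩ : ∃ y : ℝ, y = (D / (10 ^ 8 * (k * ℓ))) ^ ((1 : ℝ) / 3) := ⟨_, rfl⟩
  have hz0 : 0 < D / (10 ^ 8 * (k * ℓ)) := by positivity
  have hy0 : 0 < y := by rw [hy]; positivity
  have hy3 : y ^ 3 = D / (10 ^ 8 * (k * ℓ)) := by
    rw [hy, ← Real.rpow_natCast, ← Real.rpow_mul hz0.le]; norm_num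
  have hyk : y ^ 3 * k * ℓ = D / 10 ^ 8 := by rw [hy3]; field_simp
  have huy : u ≤ 10 ^ 5 * (v * y) := by
    have h1 : u ^ 3 ≤ (10 ^ 5 * (v * y)) ^ 3 := by
      have h2 : D * u ^ 3 ≤ D * (10 ^ 5 * (v * y)) ^ 3 := by
        calc D * u ^ 3 = 10 ^ 8 * (y ^ 3 * (k * ℓ * u ^ 3)) := by
              rw [show 10 ^ 8 * (y ^ 3 * (k * ℓ * u ^ 3)) = 10 ^ 8 * (y ^ 3 * k * ℓ) * u ^ 3 by ring, hyk]
              ring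
          _ ≤ 10 ^ 8 * (y ^ 3 * (10001 * (D * ℓ))) := by gcongr
          _ = 10 ^ 8 * 10001 * (D * (v * y) ^ 3) := by rw [hℓv]; ring
          _ ≤ 10 ^ 15 * (D * (v * y) ^ 3) := by gcongr; norm_num
          _ = _ := by ring
      exact le_of_mul_le_mul_left h2 hD0
    exact le_of_pow_le_pow_left₀ (by norm_num) (by positivity) h1
  rcases le_or_gt 1 y with hy1 | hy1
  · obtain ⟨P, hP⟩ : ∃ P : ℕ, P = ⌊y⌋₊ := ⟨_, rfl⟩
    have hP1 : 1 ≤ P := by rw [hP]; exact Nat.le_floor (by simpa using hy1)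
    have hPr : (1 : ℝ) ≤ P := by exact_mod_cast hP1
    have hPy : (P : ℝ) ≤ y := by rw [hP]; exact Nat.floor_le hy0.le
    have hyP : y < P + 1 := by rw [hP]; exact Nat.lt_floor_add_one _
    have hPk : (P : ℝ) ^ 3 * k * Real.log d ≤ d / 10 ^ 8 := by
      rw [← hℓ, ← hDdef, ← hyk]; gcongr
    have hC := (core2 hd hk1 hP1 hT alg hmin hPk).2 (by rw [← hℓ, ← hDdef]; exact hMk)
    have hm : D / 20000 ≤ ((d / 1000 / 10 : ℕ) : ℝ) := by
      have h1 : d ≤ (d / 1000 / 10) * 10000 + 10000 := by omega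
      have h2 : (d : ℝ) ≤ ((d / 1000 / 10 : ℕ) : ℝ) * 10000 + 10000 := by exact_mod_cast h1
      rw [← hDdef] at h2
      linarith
    have hC' : (P : ℝ) * ((d / 1000 / 10 : ℕ) : ℝ) ≤ T := by exact_mod_cast hC
    have h1 : y / 2 * (D / 20000) ≤ P * ((d / 1000 / 10 : ℕ) : ℝ) := by
      gcongr; linarith
    have h2 : 1 / 10 ^ 15 * (D * u) / v ^ 5 ≤ 1 / 10 ^ 10 * (D * y) := by
      rw [div_le_iff₀ (by positivity)]
      calc 1 / 10 ^ 15 * (D * u) ≤ 1 / 10 ^ 15 * (D * (10 ^ 5 * (v * y))) := by gcongr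
        _ = 1 / 10 ^ 10 * (D * y) * v := by ring
        _ ≤ 1 / 10 ^ 10 * (D * y) * v ^ 5 := by
          gcongr; exact le_self_pow₀ hv1 (by norm_num)
    have h3 : 0 < D * y := by positivity
    linarith
  · have hDl : 10 ^ 8 * ℓ ≤ D := by
      have hs2 : √D ^ 2 = D := Real.sq_sqrt hD0.le
      have hs0 : 0 < √D := Real.sqrt_pos.mpr hD0
      have hs1 : 2 * 10 ^ 8 ≤ √D := by
        apply Real.le_sqrt_of_sq_le
        linarith [show ((2 : ℝ) * 10 ^ 8) ^ 2 ≤ 10 ^ 17 by norm_num]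
      have h1 : ℓ ≤ 2 * √D := by
        have h2 := Real.log_le_sub_one_of_pos hs0
        rw [Real.log_sqrt hD0.le] at h2
        rw [hℓ, ← hDdef]
        linarith
      calc 10 ^ 8 * ℓ ≤ 10 ^ 8 * (2 * √D) := by gcongr
        _ = (2 * 10 ^ 8) * √D := by ring
        _ ≤ √D * √D := by gcongr
        _ = D := by rw [← pow_two, hs2]
    obtain ⟨q, hq⟩ : ∃ q : ℕ, q = ⌊D / (10 ^ 8 * ℓ)⌋₊ := ⟨_, rfl⟩
    have hq1 : 1 ≤ q := by
      rw [hq]; apply Nat.le_floor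
      rw [Nat.cast_one, le_div_iff₀ (by positivity)]; linarith
    have hqle : (q : ℝ) ≤ D / (10 ^ 8 * ℓ) := by rw [hq]; exact Nat.floor_le (by positivity)
    have hqlt : D / (10 ^ 8 * ℓ) < q + 1 := by rw [hq]; exact Nat.lt_floor_add_one _
    have hPk : ((1 : ℕ) : ℝ) ^ 3 * q * Real.log d ≤ d / 10 ^ 8 := by
      rw [← hℓ, ← hDdef]
      rw [le_div_iff₀ (by positivity)] at hqle
      rw [le_div_iff₀ (by norm_num)]
      norm_num
      linarith
    have hC := (core2 hd hq1 le_rfl hT alg hmin hPk).1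
    have hC' : (q : ℝ) + 1 ≤ T := by
      have : q + 1 ≤ T := by omega
      exact_mod_cast this
    refine le_trans ?_ (hqlt.le.trans hC')
    rw [div_le_div_iff₀ (by positivity) (by positivity), hℓv]
    calc 1 / 10 ^ 15 * (D * u) * (10 ^ 8 * v ^ 3)
        ≤ 1 / 10 ^ 15 * (D * (10 ^ 5 * (v * 1))) * (10 ^ 8 * v ^ 3) := by
          gcongr
          refine huy.trans ?_
          gcongr
      _ = 1 / 10 ^ 2 * (D * v ^ 4) := by ring
      _ ≤ 1 * (D * v ^ 5) := by
          gcongr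
          · norm_num
          · norm_num
      _ = D * v ^ 5 := one_mul _

theorem convex_optimization_memory_query_tradeoff :
    ∃ c : ℝ, 0 < c ∧ ∃ d₀ : ℕ, ∀ d : ℕ, d₀ ≤ d → ∀ δ : ℝ, 0 ≤ δ → δ ≤ 1 →
      ∀ M T : ℕ,
        ∀ alg : MemAlg M (EuclideanSpace ℝ (Fin d)) (ℝ × EuclideanSpace ℝ (Fin d)),
          MinimizesConvex d alg T (1 / (d : ℝ) ^ 4) →
            (d : ℝ) ^ ((2 : ℝ) - δ) ≤ (M : ℝ) ∨
              c * (d : ℝ) ^ ((1 : ℝ) + δ / 3) / Real.log d ^ ((5 : ℝ) / 3) ≤ (T : ℝ) := by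
  obtain ⟨d₀, hd₀⟩ := exists_nat_ge ((10 : ℝ) ^ 17)
  refine ⟨1 / 10 ^ 15, by positivity, d₀, ?_⟩
  intro d hdd δ hδ0 hδ1 M T alg hmin
  have hd : (10 : ℝ) ^ 17 ≤ d := hd₀.trans (by exact_mod_cast hdd)
  have hd1 : (1 : ℝ) ≤ d := le_trans (by norm_num) hd
  have hd0 : (0 : ℝ) < d := by linarith
  rcases le_or_gt ((d : ℝ) ^ ((2 : ℝ) - δ)) (M : ℝ) with hM | hM
  · exact Or.inl hM
  right
  have hℓ1 : 1 ≤ Real.log d := by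
    rw [Real.le_log_iff_exp_le hd0]
    have := Real.exp_one_lt_d9
    linarith
  have hℓ0 : 0 ≤ Real.log d := by linarith
  have hu3 : ((d : ℝ) ^ (δ / 3)) ^ 3 = (d : ℝ) ^ δ := by
    rw [← Real.rpow_natCast, ← Real.rpow_mul hd0.le]; congr 1; push_cast; ring
  have h := final_arith (u := (d : ℝ) ^ (δ / 3)) (v := Real.log d ^ ((1 : ℝ) / 3)) hd alg hmin
    (Real.one_le_rpow hd1 (by positivity))
    (by
      rw [hu3]
      calc (d : ℝ) ^ δ ≤ (d : ℝ) ^ (1 : ℝ) := Real.rpow_le_rpow_of_exponent_le hd1 hδ1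
        _ = d := Real.rpow_one _)
    (Real.one_le_rpow hℓ1 (by norm_num))
    (by rw [← Real.rpow_natCast, ← Real.rpow_mul hℓ0]; norm_num)
    (by
      rw [hu3]
      calc (M : ℝ) * (d : ℝ) ^ δ ≤ (d : ℝ) ^ ((2 : ℝ) - δ) * (d : ℝ) ^ δ := by gcongr
        _ = (d : ℝ) ^ (2 : ℝ) := by rw [← Real.rpow_add hd0]; congr 1; ring
        _ = (d : ℝ) ^ 2 := by
          rw [← Real.rpow_natCast]; norm_num)
  have e1 : (d : ℝ) ^ ((1 : ℝ) + δ / 3) = d * (d : ℝ) ^ (δ / 3) := by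
    rw [Real.rpow_add hd0, Real.rpow_one]
  have e2 : (Real.log d ^ ((1 : ℝ) / 3)) ^ 5 = Real.log d ^ ((5 : ℝ) / 3) := by
    rw [← Real.rpow_natCast, ← Real.rpow_mul hℓ0]; congr 1; norm_num
  rw [e1, ← e2]
  exact h
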